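/- For every ε > 0 there exists L > 0 with the following property. Let X and Y be independent finitely supported random variables taking values in G = 𝔽₂ⁿ. Then there exists a subspace V ⊆ G with H[𝐔_V] ≤ L (H[X] + H[Y]) such that H[X + 𝐔_V] − H[𝐔_V] ≤ H[X + Y] − H[Y] + ε (H[X] + H[Y]), where 𝐔_V is taken independent of X. -/

import Mathlib

open Real Pointwise

noncomputable section

abbrev Fvec (n : ℕ) : Type := Fin n → ZMod 2

/-- Shannon entropy (natural log) of a finitely supported distribution. -/
def ent {A : Type*} (p : A → ℝ) : ℝ := ∑ᶠ a, Real.negMulLog (p a)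

/-- `p` is a (finitely supported) probability distribution. -/
def IsDist {A : Type*} (p : A → ℝ) : Prop := (∀ a, 0 ≤ p a) ∧ ∑ᶠ a, p a = 1

/-- Pushforward of a distribution along a map: the distribution of `f(X)` for `X ∼ p`. -/
def push {A B : Type*} (f : A → B) (p : A → ℝ) : B → ℝ := fun b => ∑ᶠ a ∈ f ⁻¹' {b}, p a

/-- Joint distribution of a pair of independent random variables. -/
def prodDist {A B : Type*} (p : A → ℝ) (q : B → ℝ) : A × B → ℝ := fun z => p z.1 * q z.2

/-- Distribution of `X + Y` for independent `X ∼ p`, `Y ∼ q`. -/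
def conv {A : Type*} [AddGroup A] (p q : A → ℝ) : A → ℝ := fun z => ∑ᶠ x, p x * q (z - x)

/-- The distribution of `X` conditioned on `U = b`, where `r` is the joint distribution of `(X, U)`. -/
def fiber {A B : Type*} (r : A × B → ℝ) (b : B) : A → ℝ := fun a => r (a, b) / push Prod.snd r b

/-- Conditional entropy `H[X | U]` of a joint distribution `r` of `(X, U)`. -/
def condEnt {A B : Type*} (r : A × B → ℝ) : ℝ := ∑ᶠ b, push Prod.snd r b * ent (fiber r b)

/-- Doubling mass `s[X ; Y]` (of independent copies with distributions `p`, `q`). -/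
def sDouble {A : Type*} [AddGroup A] (p q : A → ℝ) : ℝ := ent p + ent q - ent (conv p q)

/-- Conditional doubling mass `s[X | U ; Y | W] = 𝔼_{u ∼ U, w ∼ W} s[X_u ; Y_w]`,
where `r1`, `r2` are the joint distributions of `(X, U)` and `(Y, W)`. -/
def sCond {A U W : Type*} [AddGroup A] (r1 : A × U → ℝ) (r2 : A × W → ℝ) : ℝ :=
  ∑ᶠ u, ∑ᶠ w, push Prod.snd r1 u * push Prod.snd r2 w * sDouble (fiber r1 u) (fiber r2 w)

/-- Conditional mutual information `I[A : B | S]` of a joint distribution of `(A, B, S)`. -/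
def condMI {A B S : Type*} (r : A × B × S → ℝ) : ℝ :=
  ent (push (fun z => (z.1, z.2.2)) r) + ent (push (fun z => z.2) r)
    - ent r - ent (push (fun z => z.2.2) r)

/-- Uniform distribution on a set. -/
def unifOn {A : Type*} (s : Set A) : A → ℝ := s.indicator fun _ => (Nat.card s : ℝ)⁻¹

/-- Entropic Ruzsa distance `d[X ; Y]`. -/
def dRuzsa {A : Type*} [AddGroup A] (p q : A → ℝ) : ℝ := ent (conv p q) - ent p / 2 - ent q / 2

/-- Joint distribution of `(X, X + Y)` for independent `X ∼ p`, `Y ∼ q`. -/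
def jointSum {A : Type*} [AddGroup A] (p q : A → ℝ) : A × A → ℝ :=
  push (fun z : A × A => (z.1, z.1 + z.2)) (prodDist p q)

/-- Joint distribution of `(X, π_V(X))`. -/
def selfProj {n : ℕ} (V : Submodule (ZMod 2) (Fvec n)) (p : Fvec n → ℝ) :
    Fvec n × (Fvec n ⧸ V) → ℝ := push (fun x => (x, V.mkQ x)) p

/-- Joint distribution of independent `(X₁, X₂, Y₁, Y₂)` with `X₁, X₂ ∼ p` and `Y₁, Y₂ ∼ q`. -/
def quad {A : Type*} (p q : A → ℝ) : A × A × A × A → ℝ :=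
  fun z => p z.1 * p z.2.1 * q z.2.2.1 * q z.2.2.2

/-- Distribution of `X₁ + ⋯ + X_k` for independent `Xᵢ ∼ p i`. -/
def indepSum {A : Type*} [AddCommGroup A] (k : ℕ) (p : Fin k → A → ℝ) : A → ℝ :=
  push (fun x : Fin k → A => ∑ i, x i) (fun x => ∏ i, p i (x i))

/-- Statement `A(η, L, c)` from the paper. -/
def StA (η L c : ℝ) : Prop :=
  ∀ (n : ℕ) (p q : Fvec n → ℝ), IsDist p → IsDist q →
    ent (conv p q) ≤ (1 - η) * (ent p + ent q) →
    ∃ V : Submodule (ZMod 2) (Fvec n),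
      ent (unifOn (V : Set (Fvec n))) ≤ L * (ent p + ent q) ∧
      ent (push V.mkQ p) + ent (push V.mkQ q) ≤ (1 - c) * (ent p + ent q)

/-- Statement `B(η, ε, L)` from the paper. -/
def StB (η ε L : ℝ) : Prop :=
  ∀ (n : ℕ) (p q : Fvec n → ℝ), IsDist p → IsDist q →
    ∃ V : Submodule (ZMod 2) (Fvec n),
      ent (unifOn (V : Set (Fvec n))) ≤ L * (ent p + ent q) ∧
      ent (conv (push V.mkQ p) (push V.mkQ q)) ≥
        (1 - η) * (ent (push V.mkQ p) + ent (push V.mkQ q)) - ε * (ent p + ent q)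

/-!
Write `s[X; Y] = H[X] + H[Y] - H[X + Y]` for the doubling mass. It suffices to find, for every
`η > 0`, a subspace `V` of dimension `O(H[X] + H[Y])` modulo which `s[X; Y] ≤ η (H[X] + H[Y])`;
submodularity turns this into the stated inequality. Let `η` be the infimum of the constants for
which this is possible, and suppose that `η > 0`. Then there are pairs that lose little entropy in
any quotient by a small subspace and for which `s[X; Y]` is within a small error of
`η (H[X] + H[Y])`.

The fibring identity `2 s[X; Y] + I = s[X + Y; X' + Y'] + 𝔼 s[X_u; Y_w]`, in which `X_u` and `Y_w`
are the laws conditioned on the sums, and `I` is a conditional mutual information, bounds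
`2 s[X; Y]` by two terms that satisfy the upper bound with the same `η`. Hence `I` is small and
`(X + Y, X' + Y')` is near-extremal too. Applied to a self-pair `(T, T')` obtained by two such
steps, the identity shows that the fibres satisfy `𝔼 s[T_u; T_w] ≥ 4 η² H[T] - o(H[T])`. On the
other hand, since `I` is small, the entropic Balog–Szemerédi–Gowers argument in characteristic two
refines the fibres to laws of small Ruzsa distance from themselves, which a weak polynomial
Freiman–Ruzsa theorem places near cosets of subspaces. Averaged over a family of such laws the
doubling mass is small, and this contradicts the lower bound.

Averages over families are controlled by attaching to each member a subspace, all of them containing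
a common base and chosen by minimising an energy: on average, the subspaces of two members then
meet in little more than the base, and transverse quotients can be taken independently.
-/

/-! ## Finite distributions and their entropy -/

section FiniteDistributions

variable {Ω Ω' A B C U W : Type*}

lemma eq_of_forall_sum_mul_eq [Fintype A] {p q : A → ℝ}
    (h : ∀ F : A → ℝ, ∑ a, p a * F a = ∑ a, q a * F a) : p = q := by
  classical
  funext a
  simpa [Pi.single_apply] using h (Pi.single a 1)

lemma isDist_iff [Fintype A] {p : A → ℝ} : IsDist p ↔ (∀ a, 0 ≤ p a) ∧ ∑ a, p a = 1 := by
  rw [IsDist, finsum_eq_sum_of_fintype]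

lemma IsDist.sum_eq_one [Fintype A] {p : A → ℝ} (hp : IsDist p) : ∑ a, p a = 1 :=
  (isDist_iff.1 hp).2

lemma IsDist.nonneg {p : A → ℝ} (hp : IsDist p) (a : A) : 0 ≤ p a := hp.1 a

lemma IsDist.le_one [Finite A] {p : A → ℝ} (hp : IsDist p) (a : A) : p a ≤ 1 := by
  cases nonempty_fintype A
  exact hp.sum_eq_one ▸ Finset.single_le_sum (fun b _ => hp.nonneg b) (Finset.mem_univ a)

lemma ent_eq_sum [Fintype A] (p : A → ℝ) : ent p = ∑ a, negMulLog (p a) :=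
  finsum_eq_sum_of_fintype _

lemma ent_nonneg [Finite A] {p : A → ℝ} (hp : IsDist p) : 0 ≤ ent p := by
  cases nonempty_fintype A
  rw [ent_eq_sum]
  exact Finset.sum_nonneg fun a _ => negMulLog_nonneg (hp.nonneg a) (hp.le_one a)

open scoped Classical in
lemma push_apply [Fintype Ω] (f : Ω → A) (P : Ω → ℝ) (a : A) :
    push f P a = ∑ ω, if f ω = a then P ω else 0 := by
  simp [push, finsum_eq_sum_of_fintype, finsum_eq_if]

lemma sum_push_mul [Fintype Ω] [Fintype A] (f : Ω → A) (P : Ω → ℝ) (F : A → ℝ) :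
    ∑ a, push f P a * F a = ∑ ω, P ω * F (f ω) := by
  classical
  simp only [push_apply, Finset.sum_mul, ite_mul, zero_mul]
  rw [Finset.sum_comm]
  simp only [Finset.sum_ite_eq, Finset.mem_univ, if_true]

protected lemma IsDist.push [Finite Ω] [Finite A] {P : Ω → ℝ} (hP : IsDist P) (f : Ω → A) :
    IsDist (push f P) := by
  classical
  cases nonempty_fintype Ω
  cases nonempty_fintype A
  refine isDist_iff.2 ⟨fun a => ?_, ?_⟩
  · rw [push_apply]
    exact Finset.sum_nonneg fun ω _ => by split_ifs <;> simp [hP.nonneg]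
  · simpa [hP.sum_eq_one] using sum_push_mul f P fun _ => 1

lemma push_push [Finite Ω] [Finite A] [Finite B] (g : A → B) (f : Ω → A) (P : Ω → ℝ) :
    push g (push f P) = push (fun ω => g (f ω)) P := by
  cases nonempty_fintype Ω
  cases nonempty_fintype A
  cases nonempty_fintype B
  refine eq_of_forall_sum_mul_eq fun F => ?_
  simp only [sum_push_mul]

lemma push_id [Finite Ω] (P : Ω → ℝ) : push (fun ω => ω) P = P := by
  cases nonempty_fintype Ω
  exact eq_of_forall_sum_mul_eq fun F => sum_push_mul _ _ _

lemma push_apply_mono [Finite Ω] {P : Ω → ℝ} (hP : IsDist P) {f : Ω → A} {g : Ω → B}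
    (h : g.FactorsThrough f) (ω : Ω) : push f P (f ω) ≤ push g P (g ω) := by
  classical
  cases nonempty_fintype Ω
  simp only [push_apply]
  refine Finset.sum_le_sum fun ω' _ => ?_
  by_cases hf : f ω' = f ω
  · simp [hf, h hf]
  · rw [if_neg hf]
    split_ifs <;> simp [hP.nonneg]

lemma le_push_apply [Finite Ω] {P : Ω → ℝ} (hP : IsDist P) (f : Ω → A) (ω : Ω) :
    P ω ≤ push f P (f ω) := by
  simpa only [push_id] using
    push_apply_mono hP (f := fun ω => ω) (fun _ _ h => congrArg f h) ω

lemma ent_push_eq [Fintype Ω] [Finite A] (f : Ω → A) (P : Ω → ℝ) :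
    ent (push f P) = -∑ ω, P ω * log (push f P (f ω)) := by
  cases nonempty_fintype A
  rw [← sum_push_mul f P fun a => log (push f P a), ent_eq_sum]
  simp only [negMulLog, neg_mul, Finset.sum_neg_distrib]

lemma ent_push_le_of_factorsThrough [Finite Ω] [Finite A] [Finite B] {P : Ω → ℝ}
    (hP : IsDist P) {f : Ω → A} {g : Ω → B} (h : g.FactorsThrough f) :
    ent (push g P) ≤ ent (push f P) := by
  cases nonempty_fintype Ω
  simp only [ent_push_eq]
  refine neg_le_neg (Finset.sum_le_sum fun ω _ => ?_)
  rcases (hP.nonneg ω).eq_or_lt with h0 | h0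
  · simp [← h0]
  · exact mul_le_mul_of_nonneg_left
      (log_le_log (h0.trans_le (le_push_apply hP f ω)) (push_apply_mono hP h ω)) h0.le

lemma ent_push_congr [Finite Ω] [Finite A] [Finite B] {P : Ω → ℝ} (hP : IsDist P) {f : Ω → A}
    {g : Ω → B} (h : ∀ x y, f x = f y ↔ g x = g y) : ent (push f P) = ent (push g P) :=
  le_antisymm (ent_push_le_of_factorsThrough hP fun x y => (h x y).2)
    (ent_push_le_of_factorsThrough hP fun x y => (h x y).1)

lemma ent_push_le [Finite Ω] [Finite A] {P : Ω → ℝ} (hP : IsDist P) (f : Ω → A) :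
    ent (push f P) ≤ ent P := by
  simpa only [push_id] using
    ent_push_le_of_factorsThrough hP (f := fun ω => ω) fun _ _ h => congrArg f h

lemma ent_push_of_injective [Finite Ω] [Finite A] {P : Ω → ℝ} (hP : IsDist P) {f : Ω → A}
    (hf : f.Injective) : ent (push f P) = ent P := by
  simpa only [push_id] using ent_push_congr hP (g := fun ω => ω) fun x y => hf.eq_iff

lemma ent_push_eq_zero [Finite Ω] [Finite A] {P : Ω → ℝ} (hP : IsDist P) {f : Ω → A}
    (h : ∀ x y, f x = f y) : ent (push f P) = 0 := by
  cases nonempty_fintype Ω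
  have hone : ∀ ω, push f P (f ω) = 1 := fun ω => by
    classical
    simp [push_apply, h _ ω, hP.sum_eq_one]
  simp [ent_push_eq, hone]

/-! ### Submodularity -/

lemma sum_push_mul_push_div [Fintype A] [Fintype B] [Fintype C] {r : A × B × C → ℝ}
    (hr : IsDist r) :
    ∑ z : A × B × C, push (fun z => (z.1, z.2.2)) r (z.1, z.2.2) * push (fun z => z.2) r z.2 /
      push (fun z => z.2.2) r z.2.2 = 1 := by
  classical
  have hAC : ∀ c, ∑ a, push (fun z : A × B × C => (z.1, z.2.2)) r (a, c) =
      push (fun z => z.2.2) r c := fun c => by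
    simp only [push_apply, Fintype.sum_prod_type, Prod.mk.injEq, ite_and]
    simp
  have hBC : ∀ c, ∑ b, push (fun z : A × B × C => z.2) r (b, c) =
      push (fun z => z.2.2) r c := fun c => by
    rw [← push_push (fun y : B × C => y.2) (fun z : A × B × C => z.2)]
    simp only [push_apply (fun y : B × C => y.2), Fintype.sum_prod_type]
    simp
  calc _ = ∑ c, (∑ a, push (fun z : A × B × C => (z.1, z.2.2)) r (a, c)) *
        (∑ b, push (fun z : A × B × C => z.2) r (b, c)) / push (fun z => z.2.2) r c := by
        simp only [Fintype.sum_prod_type, Finset.sum_mul_sum, Finset.sum_div]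
        rw [Finset.sum_congr rfl fun a _ => Finset.sum_comm, Finset.sum_comm]
    _ = ∑ c, push (fun z => z.2.2) r c := by simp only [hAC, hBC, mul_self_div_self]
    _ = 1 := (hr.push _).sum_eq_one

lemma condMI_nonneg [Finite A] [Finite B] [Finite C] {r : A × B × C → ℝ} (hr : IsDist r) :
    0 ≤ condMI r := by
  cases nonempty_fintype A
  cases nonempty_fintype B
  cases nonempty_fintype C
  let P₁ := push (fun z : A × B × C => (z.1, z.2.2)) r
  let P₂ := push (fun z : A × B × C => z.2) r
  let P₃ := push (fun z : A × B × C => z.2.2) r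
  have pointwise : ∀ z : A × B × C, r z * log (P₁ (z.1, z.2.2)) + r z * log (P₂ z.2) -
      r z * log (r z) - r z * log (P₃ z.2.2) ≤ P₁ (z.1, z.2.2) * P₂ z.2 / P₃ z.2.2 - r z := by
    intro z
    rcases (hr.nonneg z).eq_or_lt with h0 | h0
    · have h₁ := (hr.push fun z => (z.1, z.2.2)).nonneg (z.1, z.2.2)
      have h₂ := (hr.push fun z => z.2).nonneg z.2
      have h₃ := (hr.push fun z => z.2.2).nonneg z.2.2
      simpa [← h0] using div_nonneg (mul_nonneg h₁ h₂) h₃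
    · have h₁ : 0 < P₁ (z.1, z.2.2) := h0.trans_le (le_push_apply hr (fun z => (z.1, z.2.2)) z)
      have h₂ : 0 < P₂ z.2 := h0.trans_le (le_push_apply hr (fun z => z.2) z)
      have h₃ : 0 < P₃ z.2.2 := h0.trans_le (le_push_apply hr (fun z => z.2.2) z)
      have hlog := mul_le_mul_of_nonneg_left
        (log_le_sub_one_of_pos (div_pos (mul_pos h₁ h₂) (mul_pos h0 h₃))) h0.le
      rw [log_div (by positivity) (by positivity), log_mul h₁.ne' h₂.ne',
        log_mul h0.ne' h₃.ne'] at hlog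
      calc _ = r z * (log (P₁ (z.1, z.2.2)) + log (P₂ z.2) - (log (r z) + log (P₃ z.2.2))) := by
            ring
        _ ≤ _ := hlog
        _ = _ := by field_simp
  have total := Finset.sum_le_sum fun z (_ : z ∈ Finset.univ) => pointwise z
  simp only [Finset.sum_sub_distrib, Finset.sum_add_distrib] at total
  rw [sum_push_mul_push_div hr, hr.sum_eq_one, sub_self] at total
  have hr' : ent r = -∑ z, r z * log (r z) := by simp [ent_eq_sum, negMulLog]
  rw [condMI, ent_push_eq, ent_push_eq, ent_push_eq, hr']
  linarith

lemma ent_push_submodular [Finite Ω] [Finite A] [Finite B] [Finite C] {P : Ω → ℝ}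
    (hP : IsDist P) (f : Ω → A) (g : Ω → B) (h : Ω → C) :
    ent (push (fun ω => (f ω, g ω, h ω)) P) + ent (push h P) ≤
      ent (push (fun ω => (f ω, h ω)) P) + ent (push (fun ω => (g ω, h ω)) P) := by
  have hMI := condMI_nonneg (hP.push fun ω => (f ω, g ω, h ω))
  simp only [condMI, push_push] at hMI
  linarith

lemma ent_push_add_ent_push_le [Finite Ω] [Finite A] [Finite B] [Finite C] [Finite U]
    {P : Ω → ℝ} (hP : IsDist P) {f : Ω → A} {g : Ω → B} {h : Ω → C} {k : Ω → U}
    (hf : h.FactorsThrough f) (hg : h.FactorsThrough g)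
    (hk : k.FactorsThrough fun ω => (f ω, g ω)) :
    ent (push k P) + ent (push h P) ≤ ent (push f P) + ent (push g P) := by
  have hkfg : ent (push k P) ≤ ent (push (fun ω => (f ω, g ω, h ω)) P) :=
    ent_push_le_of_factorsThrough hP fun x y e => hk (by simp_all)
  have hfh : ent (push (fun ω => (f ω, h ω)) P) ≤ ent (push f P) :=
    ent_push_le_of_factorsThrough hP fun x y e => Prod.ext e (hf e)
  have hgh : ent (push (fun ω => (g ω, h ω)) P) ≤ ent (push g P) :=
    ent_push_le_of_factorsThrough hP fun x y e => Prod.ext e (hg e)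
  linarith [ent_push_submodular hP f g h]

lemma ent_push_pair_le [Finite Ω] [Finite A] [Finite B] {P : Ω → ℝ} (hP : IsDist P)
    (f : Ω → A) (g : Ω → B) :
    ent (push (fun ω => (f ω, g ω)) P) ≤ ent (push f P) + ent (push g P) := by
  have h := ent_push_add_ent_push_le hP (f := f) (g := g) (h := fun _ => ())
    (k := fun ω => (f ω, g ω)) (fun _ _ _ => rfl) (fun _ _ _ => rfl) fun _ _ e => e
  linarith [ent_push_eq_zero hP (f := fun _ => ()) fun _ _ => rfl]

lemma ent_push_prod_add_ent_push_le [Finite Ω] [Finite A] [Finite B] [Finite C] {P : Ω → ℝ}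
    (hP : IsDist P) {f : Ω → A} {g : Ω → B} (s : Ω → C) (h : g.FactorsThrough f) :
    ent (push (fun ω => (f ω, s ω)) P) + ent (push g P) ≤
      ent (push f P) + ent (push (fun ω => (g ω, s ω)) P) :=
  ent_push_add_ent_push_le hP h (fun _ _ e => congrArg Prod.fst e) fun _ _ e => by simp_all

end FiniteDistributions

/-! ## Mixtures and conditional laws -/

section Mixtures

variable {Ω Ω' A B C D U W : Type*}

/-- The law of a pair `(u, ω)` obtained by choosing `u` with law `a` and then `ω` with law
`Q u`. -/
def mix (a : U → ℝ) (Q : U → Ω → ℝ) : U × Ω → ℝ := fun z => a z.1 * Q z.1 z.2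

protected lemma IsDist.mix [Finite U] [Finite Ω] {a : U → ℝ} {Q : U → Ω → ℝ} (ha : IsDist a)
    (hQ : ∀ u, IsDist (Q u)) : IsDist (mix a Q) := by
  cases nonempty_fintype U
  cases nonempty_fintype Ω
  refine isDist_iff.2 ⟨fun z => mul_nonneg (ha.nonneg _) ((hQ _).nonneg _), ?_⟩
  simp only [Fintype.sum_prod_type, mix, ← Finset.mul_sum, (hQ _).sum_eq_one, mul_one,
    ha.sum_eq_one]

lemma ent_mix [Fintype U] [Finite Ω] {a : U → ℝ} {Q : U → Ω → ℝ} (hQ : ∀ u, IsDist (Q u)) :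
    ent (mix a Q) = ent a + ∑ u, a u * ent (Q u) := by
  cases nonempty_fintype Ω
  simp only [ent_eq_sum, mix, Fintype.sum_prod_type, negMulLog_mul, Finset.sum_add_distrib,
    ← Finset.mul_sum, ← Finset.sum_mul, (hQ _).sum_eq_one, one_mul]

lemma push_mix [Finite U] [Finite Ω] [Finite A] (a : U → ℝ) (Q : U → Ω → ℝ) (f : U → Ω → A) :
    push (fun z : U × Ω => (z.1, f z.1 z.2)) (mix a Q) = mix a fun u => push (f u) (Q u) := by
  cases nonempty_fintype U
  cases nonempty_fintype Ω
  cases nonempty_fintype A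
  refine eq_of_forall_sum_mul_eq fun F => ?_
  simp only [sum_push_mul, mix, Fintype.sum_prod_type, mul_assoc, ← Finset.mul_sum]

lemma push_snd_mix [Fintype U] [Finite Ω] (a : U → ℝ) (Q : U → Ω → ℝ) :
    push Prod.snd (mix a Q) = ∑ u, a u • Q u := by
  cases nonempty_fintype Ω
  refine eq_of_forall_sum_mul_eq fun F => ?_
  simp only [sum_push_mul, mix, Fintype.sum_prod_type, Finset.sum_apply, Pi.smul_apply,
    smul_eq_mul, Finset.sum_mul]
  exact Finset.sum_comm

lemma sum_mul_ent_le_ent_sum [Fintype U] [Finite Ω] {a : U → ℝ} {Q : U → Ω → ℝ} (ha : IsDist a)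
    (hQ : ∀ u, IsDist (Q u)) : ∑ u, a u * ent (Q u) ≤ ent (∑ u, a u • Q u) := by
  have h := ent_push_pair_le (ha.mix hQ) Prod.fst Prod.snd
  have hfst : push Prod.fst (mix a Q) = a := by
    cases nonempty_fintype Ω
    refine eq_of_forall_sum_mul_eq fun F => ?_
    simp only [sum_push_mul, mix, Fintype.sum_prod_type, mul_assoc, mul_comm (Q _ _),
      ← Finset.mul_sum, (hQ _).sum_eq_one, mul_one]
  simp only [Prod.mk.eta, push_id, ent_mix hQ, push_snd_mix, hfst] at h
  linarith

/-! ### Independent pairs -/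

protected lemma IsDist.prodDist [Finite Ω] [Finite Ω'] {P : Ω → ℝ} {Q : Ω' → ℝ} (hP : IsDist P)
    (hQ : IsDist Q) : IsDist (prodDist P Q) :=
  hP.mix fun _ => hQ

lemma ent_prodDist [Finite Ω] [Finite Ω'] {P : Ω → ℝ} {Q : Ω' → ℝ} (hP : IsDist P)
    (hQ : IsDist Q) : ent (prodDist P Q) = ent P + ent Q := by
  cases nonempty_fintype Ω
  have h := ent_mix (a := P) (Q := fun _ => Q) fun _ => hQ
  rwa [← Finset.sum_mul, hP.sum_eq_one, one_mul] at h

lemma push_prodDist [Finite Ω] [Finite Ω'] [Finite A] [Finite B] (f : Ω → A) (g : Ω' → B)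
    (P : Ω → ℝ) (Q : Ω' → ℝ) :
    push (fun z : Ω × Ω' => (f z.1, g z.2)) (prodDist P Q) =
      prodDist (push f P) (push g Q) := by
  cases nonempty_fintype Ω
  cases nonempty_fintype Ω'
  cases nonempty_fintype A
  cases nonempty_fintype B
  refine eq_of_forall_sum_mul_eq fun F => ?_
  simp only [sum_push_mul, prodDist, Fintype.sum_prod_type, mul_assoc, ← Finset.mul_sum]

lemma ent_push_prodDist [Finite Ω] [Finite Ω'] [Finite A] [Finite B] {P : Ω → ℝ} {Q : Ω' → ℝ}
    (hP : IsDist P) (hQ : IsDist Q) (f : Ω → A) (g : Ω' → B) :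
    ent (push (fun z : Ω × Ω' => (f z.1, g z.2)) (prodDist P Q)) =
      ent (push f P) + ent (push g Q) := by
  rw [push_prodDist, ent_prodDist (hP.push f) (hQ.push g)]

lemma push_swap_prodDist [Finite Ω] [Finite Ω'] (P : Ω → ℝ) (Q : Ω' → ℝ) :
    push Prod.swap (prodDist P Q) = prodDist Q P := by
  cases nonempty_fintype Ω
  cases nonempty_fintype Ω'
  refine eq_of_forall_sum_mul_eq fun F => ?_
  simp only [sum_push_mul, prodDist, Fintype.sum_prod_type, Prod.swap_prod_mk]
  rw [Finset.sum_comm]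
  simp only [mul_comm (Q _)]

lemma push_fst_prodDist [Finite Ω] [Finite Ω'] [Finite A] (f : Ω → A) (P : Ω → ℝ) {Q : Ω' → ℝ}
    (hQ : IsDist Q) : push (fun z : Ω × Ω' => f z.1) (prodDist P Q) = push f P := by
  cases nonempty_fintype Ω
  cases nonempty_fintype Ω'
  cases nonempty_fintype A
  refine eq_of_forall_sum_mul_eq fun F => ?_
  simp only [sum_push_mul, prodDist, Fintype.sum_prod_type, mul_assoc, ← Finset.mul_sum,
    ← Finset.sum_mul, hQ.sum_eq_one, one_mul]

lemma push_snd_prodDist [Finite Ω] [Finite Ω'] [Finite A] (f : Ω' → A) {P : Ω → ℝ}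
    (hP : IsDist P) (Q : Ω' → ℝ) :
    push (fun z : Ω × Ω' => f z.2) (prodDist P Q) = push f Q := by
  rw [← push_fst_prodDist f Q hP, ← push_swap_prodDist P Q, push_push]
  rfl

lemma push_assoc_prodDist [Finite A] [Finite B] [Finite C] (p : A → ℝ) (q : B → ℝ) (r : C → ℝ) :
    push (fun z : A × B × C => ((z.1, z.2.1), z.2.2)) (prodDist p (prodDist q r)) =
      prodDist (prodDist p q) r := by
  cases nonempty_fintype A
  cases nonempty_fintype B
  cases nonempty_fintype C
  refine eq_of_forall_sum_mul_eq fun F => ?_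
  simp only [sum_push_mul, prodDist, Fintype.sum_prod_type, mul_assoc]

lemma push_prodDist_mix [Finite U] [Finite W] [Finite A] [Finite B] (a : U → ℝ) (b : W → ℝ)
    (Q : U → A → ℝ) (R : W → B → ℝ) :
    push (fun z : (U × A) × (W × B) => ((z.1.1, z.2.1), (z.1.2, z.2.2)))
        (prodDist (mix a Q) (mix b R)) =
      mix (prodDist a b) fun z => prodDist (Q z.1) (R z.2) := by
  cases nonempty_fintype U
  cases nonempty_fintype W
  cases nonempty_fintype A
  cases nonempty_fintype B
  refine eq_of_forall_sum_mul_eq fun F => ?_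
  simp only [sum_push_mul, prodDist, mix, Fintype.sum_prod_type]
  refine Finset.sum_congr rfl fun u _ => Finset.sum_comm.trans ?_
  refine Finset.sum_congr rfl fun w _ => Finset.sum_congr rfl fun x _ =>
    Finset.sum_congr rfl fun y _ => ?_
  ring

/-! ### Conditional laws -/

open scoped Classical in
/-- The law of `X` given `U = u`. When `U = u` has probability zero we take the law of `X`, so as
to obtain a distribution for every `u`. -/
def condLaw (P : Ω → ℝ) (U : Ω → A) (X : Ω → B) (u : A) : B → ℝ :=
  if push U P u = 0 then push X P else fiber (push (fun ω => (X ω, U ω)) P) u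

variable [Finite Ω] [Finite Ω'] {P : Ω → ℝ} {Q : Ω' → ℝ}

lemma mix_condLaw [Finite A] [Finite B] (hP : IsDist P) (U : Ω → A) (X : Ω → B) :
    mix (push U P) (condLaw P U X) = push (fun ω => (U ω, X ω)) P := by
  classical
  cases nonempty_fintype Ω
  funext ⟨u, x⟩
  have hswap : push (fun ω => (X ω, U ω)) P (x, u) = push (fun ω => (U ω, X ω)) P (u, x) := by
    simp only [push_apply, Prod.mk.injEq, and_comm]
  by_cases h : push U P u = 0
  · have hle : push (fun ω => (U ω, X ω)) P (u, x) ≤ push U P u := by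
      simpa only [push_push] using le_push_apply (hP.push fun ω => (U ω, X ω)) Prod.fst (u, x)
    simpa [mix, h] using (hle.trans h.le).antisymm' ((hP.push _).nonneg _)
  · simp only [mix, condLaw, h, if_false, fiber, push_push, hswap]
    field_simp

protected lemma IsDist.condLaw [Finite A] [Finite B] (hP : IsDist P) (U : Ω → A) (X : Ω → B)
    (u : A) : IsDist (condLaw P U X u) := by
  classical
  cases nonempty_fintype Ω
  cases nonempty_fintype B
  by_cases h : push U P u = 0
  · simpa only [condLaw, h, if_true] using hP.push X
  · have hsum : ∑ x, push (fun ω => (X ω, U ω)) P (x, u) = push U P u := by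
      simp only [push_apply, Prod.mk.injEq, ite_and]
      rw [Finset.sum_comm]
      simp
    simp only [condLaw, h, if_false]
    refine isDist_iff.2 ⟨fun x => ?_, ?_⟩
    · simp only [fiber, push_push]
      exact div_nonneg ((hP.push _).nonneg _) ((hP.push U).nonneg _)
    · simp only [fiber, push_push, ← Finset.sum_div, hsum, div_self h]

lemma push_condLaw [Finite A] [Finite B] [Finite C] (hP : IsDist P) (U : Ω → A) (X : Ω → B)
    (f : B → C) (u : A) : push f (condLaw P U X u) = condLaw P U (fun ω => f (X ω)) u := by
  by_cases h : push U P u = 0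
  · simp only [condLaw, h, if_true, push_push]
  · funext c
    have hmix : mix (push U P) (fun u => push f (condLaw P U X u)) =
        mix (push U P) (condLaw P U fun ω => f (X ω)) := by
      rw [← push_mix, mix_condLaw hP, mix_condLaw hP, push_push]
    exact mul_left_cancel₀ h (congrFun hmix (u, c))

lemma condLaw_push [Finite A] [Finite B] (g : Ω → Ω') (P : Ω → ℝ) (U : Ω' → A) (X : Ω' → B) :
    condLaw (push g P) U X = condLaw P (fun ω => U (g ω)) fun ω => X (g ω) := by
  funext u
  simp only [condLaw, push_push]

lemma sum_push_smul_condLaw [Fintype A] [Finite B] (hP : IsDist P) (U : Ω → A) (X : Ω → B) :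
    ∑ u, push U P u • condLaw P U X u = push X P := by
  rw [← push_snd_mix, mix_condLaw hP, push_push]

lemma sum_push_mul_ent_condLaw [Fintype A] [Finite B] (hP : IsDist P) (U : Ω → A) (X : Ω → B) :
    ∑ u, push U P u * ent (condLaw P U X u) =
      ent (push (fun ω => (U ω, X ω)) P) - ent (push U P) := by
  rw [← mix_condLaw hP, ent_mix fun u => hP.condLaw U X u]
  ring

lemma sum_push_mul_ent_push_condLaw [Fintype A] [Finite B] [Finite C] (hP : IsDist P)
    (U : Ω → A) (X : Ω → B) (f : B → C) :
    ∑ u, push U P u * ent (push f (condLaw P U X u)) =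
      ent (push (fun ω => (U ω, f (X ω))) P) - ent (push U P) := by
  simp only [push_condLaw hP]
  exact sum_push_mul_ent_condLaw hP U fun ω => f (X ω)

lemma sum_push_mul_ent_push_prodDist_condLaw [Fintype A] [Finite B] [Fintype C] [Finite D]
    [Finite W] (hP : IsDist P) (hQ : IsDist Q) (U : Ω → A) (X : Ω → B) (V : Ω' → C)
    (Y : Ω' → D) (f : B × D → W) :
    ∑ u, ∑ v, push U P u * push V Q v *
        ent (push f (prodDist (condLaw P U X u) (condLaw Q V Y v))) =
      ent (push (fun z : Ω × Ω' => ((U z.1, V z.2), f (X z.1, Y z.2))) (prodDist P Q)) -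
        ent (push U P) - ent (push V Q) := by
  have hmix : push (fun z : Ω × Ω' => ((U z.1, V z.2), f (X z.1, Y z.2))) (prodDist P Q) =
      mix (prodDist (push U P) (push V Q))
        fun z => push f (prodDist (condLaw P U X z.1) (condLaw Q V Y z.2)) := by
    rw [← push_mix _ _ fun _ => f, ← push_prodDist_mix, mix_condLaw hP, mix_condLaw hQ,
      ← push_prodDist (fun ω => (U ω, X ω)) (fun ω => (V ω, Y ω)), push_push, push_push]
  rw [hmix, ent_mix fun z => ((hP.condLaw U X _).prodDist (hQ.condLaw V Y _)).push f,
    ent_prodDist (hP.push U) (hQ.push V), Fintype.sum_prod_type]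
  simp only [prodDist]
  ring

end Mixtures

/-! ## Sums of independent variables in a finite abelian group -/

section Groups

variable {G : Type*} [AddCommGroup G]

lemma conv_eq_push [Finite G] (p q : G → ℝ) :
    conv p q = push (fun z => z.1 + z.2) (prodDist p q) := by
  classical
  cases nonempty_fintype G
  funext z
  simp only [conv, finsum_eq_sum_of_fintype, push_apply, prodDist, Fintype.sum_prod_type]
  refine Finset.sum_congr rfl fun x _ => ?_
  simp [add_comm x, ← eq_sub_iff_add_eq]

lemma sum_conv_mul [Fintype G] (p q f : G → ℝ) :
    ∑ x, conv p q x * f x = ∑ x, ∑ y, p x * q y * f (x + y) := by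
  simp only [conv_eq_push, sum_push_mul, prodDist, Fintype.sum_prod_type]

variable {H F : Type*} [Finite G] [AddCommGroup H] [Finite H] [FunLike F G H]
  [AddMonoidHomClass F G H] {p q r : G → ℝ}

protected lemma IsDist.conv (hp : IsDist p) (hq : IsDist q) : IsDist (conv p q) := by
  rw [conv_eq_push]
  exact (hp.prodDist hq).push _

lemma conv_comm (p q : G → ℝ) : conv p q = conv q p := by
  rw [conv_eq_push, conv_eq_push, ← push_swap_prodDist p q, push_push]
  simp only [Prod.fst_swap, Prod.snd_swap, add_comm]

lemma conv_assoc (p q r : G → ℝ) : conv (conv p q) r = conv p (conv q r) := by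
  cases nonempty_fintype G
  refine eq_of_forall_sum_mul_eq fun f => ?_
  simp only [sum_conv_mul, mul_assoc, ← Finset.mul_sum, add_assoc]

lemma push_conv (φ : F) (p q : G → ℝ) :
    push φ (conv p q) = conv (push φ p) (push φ q) := by
  rw [conv_eq_push, conv_eq_push, ← push_prodDist, push_push, push_push]
  simp only [map_add]

lemma conv_sum_smul {ι : Type*} [Fintype ι] (a : ι → ℝ) (Q : ι → G → ℝ) :
    conv p (∑ i, a i • Q i) = ∑ i, a i • conv p (Q i) := by
  cases nonempty_fintype G
  funext z
  simp only [conv, finsum_eq_sum_of_fintype, Finset.sum_apply, Pi.smul_apply, smul_eq_mul,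
    Finset.mul_sum, mul_left_comm (p _)]
  exact Finset.sum_comm

lemma sDouble_comm (p q : G → ℝ) : sDouble p q = sDouble q p := by
  rw [sDouble, sDouble, conv_comm, add_comm (ent p)]

lemma ent_push_conv_add_ent_le (hp : IsDist p) (hq : IsDist q) (φ : F) :
    ent (push φ (conv p q)) + ent p ≤ ent (conv p q) + ent (push φ p) := by
  have h := ent_push_add_ent_push_le (hp.prodDist hq) (f := fun z => z.1 + z.2)
    (g := fun z => (φ z.1, z.2)) (h := fun z => φ (z.1 + z.2)) (k := fun z => z)
    (fun _ _ e => congrArg φ e) (fun x y e => by simp_all)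
    (fun x y e => by grind)
  rw [push_id, ent_prodDist hp hq, ent_push_prodDist hp hq (fun x => φ x) fun y => y, push_id,
    ← push_push φ fun z : G × G => z.1 + z.2, ← conv_eq_push] at h
  linarith

lemma ent_left_le_ent_conv (hp : IsDist p) (hq : IsDist q) : ent p ≤ ent (conv p q) := by
  have h := ent_push_conv_add_ent_le hp hq (0 : G →+ G)
  rw [ent_push_eq_zero (hp.conv hq) fun _ _ => rfl, ent_push_eq_zero hp fun _ _ => rfl] at h
  linarith

lemma ent_right_le_ent_conv (hp : IsDist p) (hq : IsDist q) : ent q ≤ ent (conv p q) :=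
  conv_comm p q ▸ ent_left_le_ent_conv hq hp

lemma sDouble_nonneg (hp : IsDist p) (hq : IsDist q) : 0 ≤ sDouble p q := by
  have h := ent_push_le (hp.prodDist hq) fun z => z.1 + z.2
  rw [← conv_eq_push, ent_prodDist hp hq] at h
  exact sub_nonneg.2 h

lemma sDouble_le_ent_left (hp : IsDist p) (hq : IsDist q) : sDouble p q ≤ ent p := by
  rw [sDouble]
  linarith [ent_right_le_ent_conv hp hq]

lemma sDouble_le_half (hp : IsDist p) (hq : IsDist q) :
    sDouble p q ≤ 1 / 2 * (ent p + ent q) := by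
  have hright := sDouble_le_ent_left hq hp
  rw [sDouble_comm] at hright
  linarith [sDouble_le_ent_left hp hq]

lemma sDouble_le_sDouble_push_add (hp : IsDist p) (hq : IsDist q) (φ : F) :
    sDouble p q ≤ sDouble (push φ p) (push φ q) + (ent p - ent (push φ p)) := by
  have h := ent_push_conv_add_ent_le hq hp φ
  rw [conv_comm q p] at h
  simp only [sDouble, ← push_conv]
  linarith

/-- The Kaimanovich–Vershik inequality. -/
lemma ent_conv_conv_add_ent_le (hr : IsDist r) (hp : IsDist p) (hq : IsDist q) :
    ent (conv r (conv p q)) + ent p ≤ ent (conv r p) + ent (conv p q) := by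
  have hP := hr.prodDist (hp.prodDist hq)
  have h := ent_push_add_ent_push_le hP (f := fun z => (z.1 + z.2.1, z.2.2))
    (g := fun z => (z.1, z.2.1 + z.2.2)) (h := fun z => z.1 + (z.2.1 + z.2.2))
    (k := fun z => z) (fun x y e => by simp_all [← add_assoc]) (fun x y e => by simp_all)
    (fun x y e => by grind)
  have hsum : push (fun z : G × G × G => z.1 + (z.2.1 + z.2.2)) (prodDist r (prodDist p q)) =
      conv r (conv p q) := by
    cases nonempty_fintype G
    refine eq_of_forall_sum_mul_eq fun f => ?_
    simp only [sum_push_mul, sum_conv_mul, prodDist, Fintype.sum_prod_type, mul_assoc,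
      ← Finset.mul_sum]
  have hleft : ent (push (fun z : G × G × G => (z.1 + z.2.1, z.2.2))
      (prodDist r (prodDist p q))) = ent (conv r p) + ent q := by
    rw [conv_eq_push r p, ← push_id q, ← ent_push_prodDist (hr.prodDist hp) hq, push_id,
      ← push_assoc_prodDist, push_push]
  have hright : ent (push (fun z : G × G × G => (z.1, z.2.1 + z.2.2))
      (prodDist r (prodDist p q))) = ent r + ent (conv p q) := by
    rw [ent_push_prodDist hr (hp.prodDist hq) (fun x => x) fun z => z.1 + z.2, push_id,
      conv_eq_push]
  rw [hsum, hleft, hright, push_id, ent_prodDist hr (hp.prodDist hq), ent_prodDist hp hq] at h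
  linarith

lemma ent_push_pair_sum_add_ent_push_le (hp : IsDist p) (hq : IsDist q) {B C : Type*} [Finite B]
    [Finite C] {f : G → B} {g : G → C} (h : g.FactorsThrough f) :
    ent (push (fun z : G × G => (f z.1, z.1 + z.2)) (prodDist p q)) + ent (push g p) ≤
      ent (push f p) + ent (push (fun z : G × G => (g z.1, z.1 + z.2)) (prodDist p q)) := by
  rw [← push_fst_prodDist f p hq, ← push_fst_prodDist g p hq]
  exact ent_push_prod_add_ent_push_le (hp.prodDist hq) _ fun _ _ e => h e

end Groups

/-! ## Uniform distributions and subspaces -/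

section Uniform

variable {A : Type*} [Finite A] {s : Set A}

lemma isDist_unifOn (hs : s.Nonempty) : IsDist (unifOn s) := by
  classical
  cases nonempty_fintype A
  have hcard : (Nat.card s : ℝ) ≠ 0 := by
    have := hs.to_subtype
    exact_mod_cast Nat.card_pos.ne'
  refine isDist_iff.2 ⟨fun a => Set.indicator_nonneg (fun _ _ => by positivity) a, ?_⟩
  simp only [unifOn, Set.indicator_apply, ← Finset.sum_filter, Finset.sum_const, nsmul_eq_mul,
    ← Fintype.card_subtype]
  rw [← Nat.card_eq_fintype_card]
  exact mul_inv_cancel₀ hcard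

lemma ent_unifOn (s : Set A) : ent (unifOn s) = log (Nat.card s) := by
  classical
  cases nonempty_fintype A
  have hterm : ∀ a, negMulLog (unifOn s a) =
      if a ∈ s then (Nat.card s : ℝ)⁻¹ * log (Nat.card s) else 0 := fun a => by
    by_cases h : a ∈ s <;> simp [unifOn, h, negMulLog]
  simp only [ent_eq_sum, hterm, ← Finset.sum_filter, Finset.sum_const, nsmul_eq_mul,
    ← Fintype.card_subtype]
  rw [← Nat.card_eq_fintype_card]
  change (Nat.card s : ℝ) * _ = _
  rcases eq_or_ne (Nat.card s : ℝ) 0 with h | h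
  · rw [h, zero_mul, log_zero]
  · rw [mul_inv_cancel_left₀ h]

end Uniform

section Subspaces

variable {G : Type*} [AddCommGroup G] [Module (ZMod 2) G]

/-- The logarithm of the cardinality of `V`, that is, the entropy of `𝐔_V`. -/
def ldim (V : Submodule (ZMod 2) G) : ℝ := log (Nat.card V)

/-- The entropy of the projection of `X` to `G ⧸ V`. -/
abbrev quotEnt (V : Submodule (ZMod 2) G) (p : G → ℝ) : ℝ := ent (push V.mkQ p)

variable {p q : G → ℝ} {V W : Submodule (ZMod 2) G}

lemma ldim_nonneg (V : Submodule (ZMod 2) G) : 0 ≤ ldim V := log_natCast_nonneg _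

lemma ldim_bot : ldim (⊥ : Submodule (ZMod 2) G) = 0 := by simp [ldim]

lemma mkQ_eq_mkQ_iff {x y : G} : V.mkQ x = V.mkQ y ↔ x - y ∈ V :=
  Submodule.Quotient.eq V

lemma factorsThrough_mkQ (h : V ≤ W) : Function.FactorsThrough W.mkQ V.mkQ := fun _ _ e =>
  mkQ_eq_mkQ_iff.2 (h (mkQ_eq_mkQ_iff.1 e))

variable [Finite G]

instance finite_quotient_submodule (V : Submodule (ZMod 2) G) : Finite (G ⧸ V) :=
  Finite.of_surjective V.mkQ V.mkQ_surjective

lemma ldim_eq (V : Submodule (ZMod 2) G) :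
    ldim V = Module.finrank (ZMod 2) V * log 2 := by
  rw [ldim, Module.natCard_eq_pow_finrank (K := ZMod 2)]
  simp

lemma ldim_mono (h : V ≤ W) : ldim V ≤ ldim W := by
  rw [ldim_eq, ldim_eq]
  gcongr
  exact Submodule.finrank_mono h

lemma ldim_sup_add_ldim_inf (V W : Submodule (ZMod 2) G) :
    ldim (V ⊔ W) + ldim (V ⊓ W) = ldim V + ldim W := by
  simp only [ldim_eq, ← add_mul]
  congr 1
  exact_mod_cast Submodule.finrank_sup_add_finrank_inf_eq V W

lemma ldim_comap_mkQ (V : Submodule (ZMod 2) G) (W : Submodule (ZMod 2) (G ⧸ V)) :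
    ldim (W.comap V.mkQ) = ldim W + ldim V := by
  have hrank := LinearMap.finrank_range_add_finrank_ker (V.mkQ.domRestrict (W.comap V.mkQ))
  have hrange : (V.mkQ.domRestrict (W.comap V.mkQ)).range = W := by
    rw [LinearMap.range_domRestrict, Submodule.map_comap_eq_of_surjective V.mkQ_surjective]
  rw [hrange, LinearMap.ker_domRestrict, Submodule.ker_mkQ,
    (Submodule.comapSubtypeEquivOfLe (V.le_comap_mkQ W)).finrank_eq] at hrank
  rw [ldim_eq, ldim_eq, ldim_eq, ← add_mul, ← hrank]
  push_cast
  rfl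

lemma ent_unifOn_submodule (V : Submodule (ZMod 2) G) : ent (unifOn (V : Set G)) = ldim V :=
  ent_unifOn _

lemma isDist_unifOn_submodule (V : Submodule (ZMod 2) G) : IsDist (unifOn (V : Set G)) :=
  isDist_unifOn ⟨0, V.zero_mem⟩

lemma quotEnt_anti (hp : IsDist p) (h : V ≤ W) : quotEnt W p ≤ quotEnt V p :=
  ent_push_le_of_factorsThrough hp (factorsThrough_mkQ h)

lemma quotEnt_le_ent (hp : IsDist p) (V : Submodule (ZMod 2) G) : quotEnt V p ≤ ent p :=
  ent_push_le hp _

lemma quotEnt_bot (hp : IsDist p) : quotEnt ⊥ p = ent p :=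
  ent_push_of_injective hp fun x y h => by simpa [sub_eq_zero] using mkQ_eq_mkQ_iff.1 h

lemma quotEnt_push_mkQ (hp : IsDist p) (V : Submodule (ZMod 2) G)
    (W : Submodule (ZMod 2) (G ⧸ V)) :
    quotEnt W (push V.mkQ p) = quotEnt (W.comap V.mkQ) p := by
  rw [quotEnt, push_push]
  exact ent_push_congr hp fun x y => by
    rw [mkQ_eq_mkQ_iff, mkQ_eq_mkQ_iff, Submodule.mem_comap, map_sub]

lemma conv_unifOn_apply (p : G → ℝ) (V : Submodule (ZMod 2) G) (x : G) :
    conv p (unifOn (V : Set G)) x = push V.mkQ p (V.mkQ x) / Nat.card V := by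
  classical
  cases nonempty_fintype G
  simp only [conv, finsum_eq_sum_of_fintype, push_apply, Finset.sum_div]
  refine Finset.sum_congr rfl fun y _ => ?_
  have hmem : V.mkQ y = V.mkQ x ↔ x - y ∈ V := by rw [eq_comm, mkQ_eq_mkQ_iff]
  simp only [unifOn, Set.indicator_apply, SetLike.mem_coe, hmem]
  split_ifs
  · exact (div_eq_mul_inv _ _).symm
  · rw [mul_zero, zero_div]

lemma push_mkQ_conv_unifOn (p : G → ℝ) (V : Submodule (ZMod 2) G) :
    push V.mkQ (conv p (unifOn (V : Set G))) = push V.mkQ p := by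
  classical
  cases nonempty_fintype G
  have := Fintype.ofFinite (G ⧸ V)
  refine eq_of_forall_sum_mul_eq fun f => ?_
  have hterm : ∀ x y, p x * unifOn (V : Set G) y * f (V.mkQ (x + y)) =
      p x * (unifOn (V : Set G) y * f (V.mkQ x)) := fun x y => by
    by_cases h : y ∈ V
    · rw [mkQ_eq_mkQ_iff.2 (show x + y - x ∈ V by simpa using h), mul_assoc]
    · simp [unifOn, h]
  simp only [sum_push_mul, sum_conv_mul, hterm, ← Finset.mul_sum, ← Finset.sum_mul,
    (isDist_unifOn_submodule V).sum_eq_one, one_mul]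

lemma ent_conv_unifOn (hp : IsDist p) (V : Submodule (ZMod 2) G) :
    ent (conv p (unifOn (V : Set G))) = quotEnt V p + ldim V := by
  classical
  cases nonempty_fintype G
  have hr := hp.conv (isDist_unifOn_submodule V)
  set r := conv p (unifOn (V : Set G)) with hrdef
  have hlog : ∀ x, r x * log (r x) =
      r x * log (push V.mkQ r (V.mkQ x)) - r x * log (Nat.card V) := fun x => by
    rcases (hr.nonneg x).eq_or_lt with h0 | h0
    · simp [← h0]
    · have hcard : (Nat.card V : ℝ) ≠ 0 := by exact_mod_cast Nat.card_pos.ne'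
      have hpush : push V.mkQ r (V.mkQ x) = Nat.card V * r x := by
        rw [hrdef, push_mkQ_conv_unifOn, conv_unifOn_apply]
        field_simp
      rw [hpush, log_mul hcard h0.ne']
      ring
  have hsum : ent r = ent (push V.mkQ r) + ldim V := by
    rw [ent_push_eq, ent_eq_sum]
    simp only [negMulLog, neg_mul, hlog, Finset.sum_neg_distrib, Finset.sum_sub_distrib,
      ← Finset.sum_mul, hr.sum_eq_one, ldim]
    ring
  rw [hsum, hrdef, push_mkQ_conv_unifOn]

lemma ent_le_quotEnt_add_ldim (hp : IsDist p) (V : Submodule (ZMod 2) G) :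
    ent p ≤ quotEnt V p + ldim V :=
  ent_conv_unifOn hp V ▸ ent_left_le_ent_conv hp (isDist_unifOn_submodule V)

lemma quotEnt_le_quotEnt_add (hp : IsDist p) (h : V ≤ W) :
    quotEnt V p ≤ quotEnt W p + (ldim W - ldim V) := by
  have hW : (W.map V.mkQ).comap V.mkQ = W := by
    rw [Submodule.comap_map_eq, Submodule.ker_mkQ, sup_eq_left.2 h]
  have hquot := ent_le_quotEnt_add_ldim (hp.push V.mkQ) (W.map V.mkQ)
  have hdim := ldim_comap_mkQ V (W.map V.mkQ)
  rw [quotEnt_push_mkQ hp, hW] at hquot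
  rw [hW] at hdim
  linarith

/-! ### The transversality bound -/

lemma ent_push_inf_pair_sum_add_le (hp : IsDist p) (hq : IsDist q)
    {A B T : Submodule (ZMod 2) G} (hA : A ≤ T) (hB : B ≤ T) :
    ent (push (fun z : G × G => ((A ⊓ B).mkQ z.1, z.1 + z.2)) (prodDist p q)) + quotEnt T q ≤
      ent (push (fun z : G × G => (A.mkQ z.1, z.1 + z.2)) (prodDist p q)) + quotEnt B q := by
  have hP := hp.prodDist hq
  rw [quotEnt, quotEnt, ← push_snd_prodDist T.mkQ hp, ← push_snd_prodDist B.mkQ hp]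
  refine ent_push_add_ent_push_le hP (fun x y e => ?_) (fun x y e => factorsThrough_mkQ hB e)
    fun x y e => ?_
  · simp only [Prod.mk.injEq] at e
    have h1 : T.mkQ x.1 = T.mkQ y.1 := factorsThrough_mkQ hA e.1
    have h2 := congrArg T.mkQ e.2
    rw [map_add, map_add, h1] at h2
    exact add_left_cancel h2
  · simp only [Prod.mk.injEq, mkQ_eq_mkQ_iff, Submodule.mem_inf] at e ⊢
    have hdiff : x.1 - y.1 = -(x.2 - y.2) := by
      rw [eq_neg_iff_add_eq_zero, ← add_sub_add_comm, e.1.2, sub_self]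
    exact ⟨⟨e.1.1, hdiff ▸ B.neg_mem e.2⟩, e.1.2⟩

lemma ent_push_mkQ_pair_sum_add_le (hp : IsDist p) (hq : IsDist q) (T : Submodule (ZMod 2) G) :
    ent (push (fun z : G × G => (T.mkQ z.1, z.1 + z.2)) (prodDist p q)) +
        quotEnt T (conv p q) ≤
      ent (conv p q) + quotEnt T p + quotEnt T q := by
  have hP := hp.prodDist hq
  have h := ent_push_add_ent_push_le hP (f := fun z => z.1 + z.2)
    (g := fun z => (T.mkQ z.1, T.mkQ z.2)) (h := fun z => T.mkQ (z.1 + z.2))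
    (k := fun z => (T.mkQ z.1, z.1 + z.2)) (fun _ _ e => congrArg T.mkQ e)
    (fun x y e => by simp_all) (fun x y e => by simp_all)
  rw [ent_push_prodDist hp hq T.mkQ T.mkQ, ← push_push T.mkQ fun z : G × G => z.1 + z.2,
    ← conv_eq_push] at h
  linarith

lemma sDouble_le_sDouble_push_mkQ_add (hp : IsDist p) (hq : IsDist q)
    {V A B T : Submodule (ZMod 2) G} (hVA : V ≤ A) (hVB : V ≤ B) (hA : A ≤ T) (hB : B ≤ T) :
    sDouble p q ≤ sDouble (push T.mkQ p) (push T.mkQ q) + (quotEnt A p - quotEnt T p) +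
      (quotEnt B q - quotEnt T q) + (ldim (A ⊓ B) - ldim V) + (ent p - quotEnt V p) := by
  have hfull : ent (push (fun z : G × G => (z.1, z.1 + z.2)) (prodDist p q)) =
      ent p + ent q := by
    rw [← ent_prodDist hp hq]
    exact ent_push_of_injective (hp.prodDist hq) fun x y e => by
      simp only [Prod.mk.injEq] at e
      exact Prod.ext e.1 (add_left_cancel (e.1 ▸ e.2))
  have hinf := ent_push_pair_sum_add_ent_push_le hp hq (f := fun x => x) (g := (A ⊓ B).mkQ)
    fun _ _ e => congrArg _ e
  have hAT := ent_push_pair_sum_add_ent_push_le hp hq (factorsThrough_mkQ hA)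
  have hVAB := quotEnt_le_quotEnt_add hp (le_inf hVA hVB)
  have hBT := ent_push_inf_pair_sum_add_le hp hq hA hB
  have hT := ent_push_mkQ_pair_sum_add_le hp hq T
  rw [hfull, push_id] at hinf
  simp only [sDouble, ← push_conv]
  linarith

end Subspaces

/-! ## Fibring and the endgame -/

section Averages

variable {G : Type*} [AddCommGroup G]

/-- The average `𝔼 s[X_u ; Y_w]` of the doubling mass over independent indices `u` and `w` with
laws `a` and `b`. -/
def avgDouble {U W : Type*} [Fintype U] [Fintype W] (a : U → ℝ) (X : U → G → ℝ) (b : W → ℝ)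
    (Y : W → G → ℝ) : ℝ :=
  ∑ u, ∑ w, a u * b w * sDouble (X u) (Y w)

lemma sum_sum_mul_mul_add {U W : Type*} [Fintype U] [Fintype W] {a : U → ℝ} {b : W → ℝ}
    (ha : IsDist a) (hb : IsDist b) (f : U → ℝ) (g : W → ℝ) :
    ∑ u, ∑ w, a u * b w * (f u + g w) = ∑ u, a u * f u + ∑ w, b w * g w := by
  have hf : ∑ u, ∑ w, a u * b w * f u = ∑ u, a u * f u := by
    simp only [← Finset.sum_mul, ← Finset.mul_sum, hb.sum_eq_one, mul_one]
  have hg : ∑ u, ∑ w, a u * b w * g w = ∑ w, b w * g w := by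
    rw [Finset.sum_comm]
    simp only [← Finset.sum_mul, ha.sum_eq_one, one_mul]
  simp only [mul_add, Finset.sum_add_distrib, hf, hg]

lemma avgDouble_eq {U W : Type*} [Fintype U] [Fintype W] {a : U → ℝ} {b : W → ℝ} (ha : IsDist a)
    (hb : IsDist b) (X : U → G → ℝ) (Y : W → G → ℝ) :
    avgDouble a X b Y = ∑ u, a u * ent (X u) + ∑ w, b w * ent (Y w) -
      ∑ u, ∑ w, a u * b w * ent (conv (X u) (Y w)) := by
  rw [← sum_sum_mul_mul_add ha hb]
  simp only [avgDouble, sDouble, mul_sub, Finset.sum_sub_distrib]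

lemma avgDouble_le_of_forall_pos {U W : Type*} [Fintype U] [Fintype W] {a : U → ℝ} {b : W → ℝ}
    {X : U → G → ℝ} {Y : W → G → ℝ} {f : U → ℝ} {g : W → ℝ} {M : U → W → ℝ} (ha : IsDist a)
    (hb : IsDist b)
    (h : ∀ u w, 0 < a u → 0 < b w → sDouble (X u) (Y w) ≤ f u + g w + M u w) :
    avgDouble a X b Y ≤
      ∑ u, a u * f u + ∑ w, b w * g w + ∑ u, ∑ w, a u * b w * M u w := by
  rw [avgDouble, ← sum_sum_mul_mul_add ha hb]
  simp only [← Finset.sum_add_distrib, ← mul_add]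
  refine Finset.sum_le_sum fun u _ => Finset.sum_le_sum fun w _ => ?_
  rcases (ha.nonneg u).eq_or_lt with hu | hu
  · simp [← hu]
  rcases (hb.nonneg w).eq_or_lt with hw | hw
  · simp [← hw]
  exact mul_le_mul_of_nonneg_left (h u w hu hw) (mul_pos hu hw).le

variable [Finite G] {Ω Ω' A B : Type*} [Finite Ω] [Finite Ω'] [Fintype A] {P : Ω → ℝ}
  {Q : Ω' → ℝ}

lemma avgDouble_condLaw [Fintype B] (hP : IsDist P) (hQ : IsDist Q) (U : Ω → A) (X : Ω → G)
    (V : Ω' → B) (Y : Ω' → G) :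
    avgDouble (push U P) (condLaw P U X) (push V Q) (condLaw Q V Y) =
      ent (push (fun ω => (U ω, X ω)) P) + ent (push (fun ω => (V ω, Y ω)) Q) -
        ent (push (fun z : Ω × Ω' => ((U z.1, V z.2), X z.1 + Y z.2)) (prodDist P Q)) := by
  have hconv := sum_push_mul_ent_push_prodDist_condLaw hP hQ U X V Y fun z => z.1 + z.2
  simp only [← conv_eq_push] at hconv
  rw [avgDouble_eq (hP.push U) (hQ.push V), sum_push_mul_ent_condLaw hP,
    sum_push_mul_ent_condLaw hQ, hconv]
  ring

lemma sum_push_mul_ent_sub_ent_push_condLaw_le [Finite B] {C : Type*} [Finite C] (hP : IsDist P)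
    (U : Ω → A) (X : Ω → B) (f : B → C) :
    ∑ u, push U P u * (ent (condLaw P U X u) - ent (push f (condLaw P U X u))) ≤
      ent (push X P) - ent (push f (push X P)) := by
  have h := ent_push_add_ent_push_le hP (f := X) (g := fun ω => (U ω, f (X ω)))
    (h := fun ω => f (X ω)) (k := fun ω => (U ω, X ω)) (fun _ _ e => congrArg f e)
    (fun _ _ e => (Prod.ext_iff.1 e).2) (fun _ _ e => by simp_all)
  simp only [mul_sub, Finset.sum_sub_distrib, sum_push_mul_ent_condLaw hP,
    sum_push_mul_ent_push_condLaw hP, push_push]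
  linarith

lemma avgDouble_condLaw_le_of_factorsThrough [Fintype B] (hP : IsDist P) {U : Ω → A}
    {V : Ω → B} (X : Ω → G) (h : V.FactorsThrough U) :
    avgDouble (push V P) (condLaw P V X) (push V P) (condLaw P V X) ≤
      avgDouble (push U P) (condLaw P U X) (push U P) (condLaw P U X) +
        2 * (ent (push (fun ω => (V ω, X ω)) P) - ent (push V P) -
          (ent (push (fun ω => (U ω, X ω)) P) - ent (push U P))) := by
  have hsub := ent_push_prod_add_ent_push_le (hP.prodDist hP)
    (f := fun z => (U z.1, U z.2)) (g := fun z => (V z.1, V z.2)) (fun z => X z.1 + X z.2)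
    fun x y e => Prod.ext (h (Prod.ext_iff.1 e).1) (h (Prod.ext_iff.1 e).2)
  rw [ent_push_prodDist hP hP, ent_push_prodDist hP hP] at hsub
  rw [avgDouble_condLaw hP hP, avgDouble_condLaw hP hP]
  linarith

end Averages

lemma ent_push_pair_sub {G Ω : Type*} [AddCommGroup G] [Finite G] [Finite Ω] {P : Ω → ℝ}
    (hP : IsDist P) (f g : Ω → G) :
    ent (push (fun ω => (f ω, g ω - f ω)) P) = ent (push (fun ω => (f ω, g ω)) P) :=
  ent_push_congr hP fun x y => by
    simp only [Prod.mk.injEq]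
    exact and_congr_right fun h => by rw [h, sub_left_inj]

section Fibring

variable {G : Type*} [AddCommGroup G] {p q r : G → ℝ}

/-- The law of `X` given `X + Y = u`, for independent `X ∼ p` and `Y ∼ q`. -/
def givenSum (p q : G → ℝ) (u : G) : G → ℝ :=
  condLaw (prodDist p q) (fun z => z.1 + z.2) Prod.fst u

/-- The joint law of `X + Y'`, `X + Y` and `X + Y + Y' + X'`, for independent `X, X' ∼ p` and
`Y, Y' ∼ q`. -/
def fibreLaw (p q : G → ℝ) : G × G × G → ℝ :=
  push (fun z : (G × G) × (G × G) =>
    (z.1.1 + z.2.1, z.1.1 + z.1.2, z.1.1 + z.1.2 + (z.2.1 + z.2.2)))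
    (prodDist (prodDist p q) (prodDist q p))

/-- The mutual information `I[X + Y' : X + Y | X + Y + Y' + X']` of the fibring identity. -/
def fibreMI (p q : G → ℝ) : ℝ := condMI (fibreLaw p q)

variable [Finite G]

protected lemma IsDist.givenSum (hp : IsDist p) (hq : IsDist q) (u : G) :
    IsDist (givenSum p q u) :=
  (hp.prodDist hq).condLaw _ _ u

protected lemma IsDist.fibreLaw (hp : IsDist p) (hq : IsDist q) : IsDist (fibreLaw p q) :=
  ((hp.prodDist hq).prodDist (hq.prodDist hp)).push _

lemma fibreMI_nonneg (hp : IsDist p) (hq : IsDist q) : 0 ≤ fibreMI p q :=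
  condMI_nonneg (hp.fibreLaw hq)

lemma push_fst_snd_sub_fst_fibreLaw (p q : G → ℝ) :
    push (fun z => (z.1, z.2.2 - z.1)) (fibreLaw p q) = prodDist (conv p q) (conv q p) := by
  cases nonempty_fintype G
  rw [fibreLaw, push_push, conv_eq_push, conv_eq_push, ← push_prodDist]
  refine eq_of_forall_sum_mul_eq fun F => ?_
  simp only [sum_push_mul, prodDist, Fintype.sum_prod_type]
  refine Finset.sum_congr rfl fun x _ => ?_
  rw [Finset.sum_comm]
  refine Finset.sum_congr rfl fun y' _ => ?_
  refine Finset.sum_congr rfl fun y _ => Finset.sum_congr rfl fun x' _ => ?_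
  rw [show x + y + (y' + x') - (x + y') = y + x' by abel]
  ring

lemma push_mid_snd_sub_mid_fibreLaw (p q : G → ℝ) :
    push (fun z => (z.2.1, z.2.2 - z.2.1)) (fibreLaw p q) =
      prodDist (conv p q) (conv q p) := by
  rw [fibreLaw, push_push, conv_eq_push, conv_eq_push, ← push_prodDist]
  simp only [add_sub_cancel_left]

lemma push_snd_snd_fibreLaw (p q : G → ℝ) :
    push (fun z => z.2.2) (fibreLaw p q) = conv (conv p q) (conv p q) := by
  have h := congrArg (push fun w => w.1 + w.2) (push_mid_snd_sub_mid_fibreLaw p q)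
  simpa only [push_push, add_sub_cancel, ← conv_eq_push, conv_comm q p] using h

lemma ent_prodDist_conv_comm (hp : IsDist p) (hq : IsDist q) :
    ent (prodDist (conv p q) (conv q p)) = 2 * ent (conv p q) := by
  rw [ent_prodDist (hp.conv hq) (hq.conv hp), conv_comm q p, two_mul]

lemma ent_push_fst_snd_fibreLaw (hp : IsDist p) (hq : IsDist q) :
    ent (push (fun z => (z.1, z.2.2)) (fibreLaw p q)) = 2 * ent (conv p q) := by
  rw [← ent_prodDist_conv_comm hp hq, ← push_fst_snd_sub_fst_fibreLaw]
  exact (ent_push_pair_sub (hp.fibreLaw hq) (fun z => z.1) fun z => z.2.2).symm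

lemma ent_push_mid_snd_fibreLaw (hp : IsDist p) (hq : IsDist q) :
    ent (push (fun z => z.2) (fibreLaw p q)) = 2 * ent (conv p q) := by
  rw [← ent_prodDist_conv_comm hp hq, ← push_mid_snd_sub_mid_fibreLaw]
  exact (ent_push_pair_sub (hp.fibreLaw hq) (fun z => z.2.1) fun z => z.2.2).symm

lemma fibreMI_eq (hp : IsDist p) (hq : IsDist q) :
    fibreMI p q = 4 * ent (conv p q) - ent (fibreLaw p q) -
      ent (conv (conv p q) (conv p q)) := by
  rw [fibreMI, condMI, ent_push_fst_snd_fibreLaw hp hq, ent_push_mid_snd_fibreLaw hp hq,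
    push_snd_snd_fibreLaw]
  ring

lemma ent_push_sum_fst (hp : IsDist p) (hq : IsDist q) :
    ent (push (fun z : G × G => (z.1 + z.2, z.1)) (prodDist p q)) = ent p + ent q := by
  rw [← ent_prodDist hp hq]
  exact ent_push_of_injective (hp.prodDist hq) fun x y e => by grind

section Fintype

variable {G : Type*} [AddCommGroup G] [Fintype G] {p q r : G → ℝ}

lemma sum_conv_mul_ent_givenSum (hp : IsDist p) (hq : IsDist q) :
    ∑ u, conv p q u * ent (givenSum p q u) = sDouble p q := by
  simp only [givenSum, conv_eq_push, sum_push_mul_ent_condLaw (hp.prodDist hq),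
    ent_push_sum_fst hp hq, sDouble]

lemma sum_conv_smul_givenSum (hp : IsDist p) (hq : IsDist q) :
    ∑ u, conv p q u • givenSum p q u = p := by
  simp only [givenSum, conv_eq_push, sum_push_smul_condLaw (hp.prodDist hq)]
  exact (push_fst_prodDist (fun x => x) p hq).trans (push_id p)

lemma sum_conv_mul_ent_sub_ent_push_givenSum_le {A : Type*} [Finite A] (hp : IsDist p)
    (hq : IsDist q) (f : G → A) :
    ∑ u, conv p q u * (ent (givenSum p q u) - ent (push f (givenSum p q u))) ≤
      ent p - ent (push f p) := by
  have hfst : push Prod.fst (prodDist p q) = p :=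
    (push_fst_prodDist (fun x => x) p hq).trans (push_id p)
  have h := sum_push_mul_ent_sub_ent_push_condLaw_le (hp.prodDist hq) (fun z => z.1 + z.2)
    Prod.fst f
  rwa [hfst, ← conv_eq_push] at h

/-- The fibring identity. -/
lemma two_mul_sDouble_add_fibreMI (hp : IsDist p) (hq : IsDist q) :
    2 * sDouble p q + fibreMI p q = sDouble (conv p q) (conv p q) +
      avgDouble (conv p q) (givenSum p q) (conv q p) (givenSum q p) := by
  have havg := avgDouble_condLaw (hp.prodDist hq) (hq.prodDist hp) (fun z => z.1 + z.2) Prod.fst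
    (fun z => z.1 + z.2) Prod.fst
  have hjoint : ent (push (fun z : (G × G) × (G × G) =>
      ((z.1.1 + z.1.2, z.2.1 + z.2.2), z.1.1 + z.2.1))
      (prodDist (prodDist p q) (prodDist q p))) = ent (fibreLaw p q) :=
    ent_push_congr ((hp.prodDist hq).prodDist (hq.prodDist hp)) fun x y => by
      simp only [Prod.mk.injEq]
      exact ⟨fun ⟨⟨h1, h2⟩, h3⟩ => ⟨h3, h1, by rw [h1, h2]⟩,
        fun ⟨h3, h1, h2⟩ => ⟨⟨h1, add_left_cancel (h1 ▸ h2)⟩, h3⟩⟩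
  rw [hjoint, ent_push_sum_fst hp hq, ent_push_sum_fst hq hp, ← conv_eq_push,
    ← conv_eq_push] at havg
  rw [fibreMI_eq hp hq]
  change _ = _ + avgDouble (conv p q) (fun u => givenSum p q u) (conv q p) fun u => givenSum q p u
  simp only [sDouble, givenSum]
  linarith

end Fintype

end Fibring

section Endgame

variable {G : Type*} [AddCommGroup G]

/-- The law of `(A + B, S)`, where `P` is the law of `(A, B, S)`. -/
def endgameWeight {C : Type*} (P : G × G × C → ℝ) : G × C → ℝ :=
  push (fun z => (z.1 + z.2.1, z.2.2)) P

/-- The law of `A` given `(A + B, S) = u`, where `P` is the law of `(A, B, S)`. -/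
def endgameLaw {C : Type*} (P : G × G × C → ℝ) (u : G × C) : G → ℝ :=
  condLaw P (fun z => (z.1 + z.2.1, z.2.2)) Prod.fst u

section BalogSzemerediGowers

variable {C : Type*} {P : G × G × C → ℝ}

/-- The law of `(A₁ + B₁, S), A₁, A₂`, where `A₂` is a copy of `A₁` that is conditionally
independent of it given `(A₁ + B₁, S)`. -/
def endgameCoupling (P : G × G × C → ℝ) : (G × C) × G × G → ℝ :=
  mix (endgameWeight P) fun u => prodDist (endgameLaw P u) (endgameLaw P u)

lemma sum_endgameWeight_mul_ent_endgameLaw [Fintype G] [Fintype C] (hP : IsDist P) :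
    ∑ u, endgameWeight P u * ent (endgameLaw P u) = ent P - ent (endgameWeight P) := by
  have hinj : ent (push (fun z : G × G × C => ((z.1 + z.2.1, z.2.2), z.1)) P) = ent P :=
    ent_push_of_injective hP fun x y e => by grind
  rw [← hinj]
  exact sum_push_mul_ent_condLaw hP _ _

section Finite

variable [Finite G] [Finite C]

protected lemma IsDist.endgameWeight (hP : IsDist P) : IsDist (endgameWeight P) := hP.push _

protected lemma IsDist.endgameLaw (hP : IsDist P) (u : G × C) : IsDist (endgameLaw P u) :=
  hP.condLaw _ _ u

protected lemma IsDist.endgameCoupling (hP : IsDist P) : IsDist (endgameCoupling P) :=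
  hP.endgameWeight.mix fun u => (hP.endgameLaw u).prodDist (hP.endgameLaw u)

lemma mix_endgameLaw (hP : IsDist P) :
    mix (endgameWeight P) (endgameLaw P) = push (fun z => ((z.1 + z.2.1, z.2.2), z.1)) P :=
  mix_condLaw hP _ _

lemma push_endgameCoupling_left {D : Type*} [Finite D] (hP : IsDist P) (f : (G × C) × G → D) :
    push (fun z => f (z.1, z.2.1)) (endgameCoupling P) =
      push (fun z => f ((z.1 + z.2.1, z.2.2), z.1)) P := by
  have h := push_mix (endgameWeight P) (fun u => prodDist (endgameLaw P u) (endgameLaw P u))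
    fun _ z => z.1
  simp only [push_fst_prodDist (fun x => x) _ (hP.endgameLaw _), push_id, mix_endgameLaw hP] at h
  rw [← push_push f fun z : G × G × C => ((z.1 + z.2.1, z.2.2), z.1), ← h, push_push,
    endgameCoupling]

lemma push_endgameCoupling_right {D : Type*} [Finite D] (hP : IsDist P) (f : (G × C) × G → D) :
    push (fun z => f (z.1, z.2.2)) (endgameCoupling P) =
      push (fun z => f ((z.1 + z.2.1, z.2.2), z.1)) P := by
  have h := push_mix (endgameWeight P) (fun u => prodDist (endgameLaw P u) (endgameLaw P u))
    fun _ z => z.2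
  simp only [push_snd_prodDist (fun x => x) (hP.endgameLaw _), push_id, mix_endgameLaw hP] at h
  rw [← push_push f fun z : G × G × C => ((z.1 + z.2.1, z.2.2), z.1), ← h, push_push,
    endgameCoupling]

lemma ent_endgameCoupling (hP : IsDist P) :
    ent (endgameCoupling P) = 2 * ent P - ent (endgameWeight P) := by
  cases nonempty_fintype G
  cases nonempty_fintype C
  have hcond : ∑ u, endgameWeight P u * ent (endgameLaw P u) = ent P - ent (endgameWeight P) :=
    sum_endgameWeight_mul_ent_endgameLaw hP
  rw [endgameCoupling, ent_mix fun u => (hP.endgameLaw u).prodDist (hP.endgameLaw u)]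
  simp only [fun u => ent_prodDist (hP.endgameLaw u) (hP.endgameLaw u), mul_add,
    Finset.sum_add_distrib, hcond]
  ring

lemma ent_endgameCoupling_add_ent_push_sub_le (hP : IsDist P) :
    ent (endgameCoupling P) +
        ent (push (fun z => (z.2.1 - (z.1.1 - z.2.2), z.1.2)) (endgameCoupling P)) ≤
      ent (push (fun z => (z.2.1, z.1.1 - z.2.2, z.1.2)) (endgameCoupling P)) +
        ent (push (fun z => (z.2.2, z.1.1 - z.2.1, z.1.2)) (endgameCoupling P)) := by
  have hcomm : ∀ z a b : G, a - (z - b) = b - (z - a) := fun z a b => by abel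
  have h := ent_push_add_ent_push_le hP.endgameCoupling
    (f := fun z => (z.2.1, z.1.1 - z.2.2, z.1.2)) (g := fun z => (z.2.2, z.1.1 - z.2.1, z.1.2))
    (h := fun z => (z.2.1 - (z.1.1 - z.2.2), z.1.2)) (k := fun z => z)
    (fun x y e => by simp only [Prod.mk.injEq] at e ⊢; rw [e.1, e.2.1]; exact ⟨rfl, e.2.2⟩)
    (fun x y e => by
      simp only [Prod.mk.injEq] at e ⊢
      rw [hcomm, hcomm y.1.1, e.1, e.2.1]
      exact ⟨rfl, e.2.2⟩)
    fun x y e => by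
      simp only [Prod.mk.injEq] at e
      obtain ⟨⟨h1, hz, hs⟩, h2, -⟩ := e
      rw [h2, sub_left_inj] at hz
      exact Prod.ext (Prod.ext hz hs) (Prod.ext h1 h2)
  rw [push_id] at h
  linarith

lemma ent_push_sum_endgameCoupling_add_le (hP : IsDist P) :
    ent (push (fun z => (z.1, z.2.1 + z.2.2)) (endgameCoupling P)) +
        ent (push (fun z => z.2.2) P) ≤
      ent (push (fun z => (z.2.1 - (z.1.1 - z.2.2), z.1.2)) (endgameCoupling P)) +
        ent (endgameWeight P) := by
  have h := ent_push_add_ent_push_le hP.endgameCoupling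
    (f := fun z => (z.2.1 - (z.1.1 - z.2.2), z.1.2)) (g := fun z => z.1) (h := fun z => z.1.2)
    (k := fun z => (z.1, z.2.1 + z.2.2)) (fun _ _ e => (Prod.ext_iff.1 e).2)
    (fun _ _ e => congrArg Prod.snd e) fun x y e => by
      simp only [Prod.mk.injEq, sub_sub_eq_add_sub] at e ⊢
      exact ⟨e.2, by simpa only [e.2, sub_left_inj] using e.1.1⟩
  rw [push_endgameCoupling_left hP fun z => z.1, push_endgameCoupling_left hP fun z => z.1.2] at h
  rw [endgameWeight]
  linarith

end Finite

variable [Fintype G] [Fintype C]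

lemma ent_push_sum_endgameCoupling (hP : IsDist P) :
    ent (push (fun z => (z.1, z.2.1 + z.2.2)) (endgameCoupling P)) = ent (endgameWeight P) +
      ∑ u, endgameWeight P u * ent (conv (endgameLaw P u) (endgameLaw P u)) := by
  have h := push_mix (endgameWeight P) (fun u => prodDist (endgameLaw P u) (endgameLaw P u))
    fun _ z => z.1 + z.2
  simp only [← conv_eq_push] at h
  rw [endgameCoupling, h, ent_mix fun u => (hP.endgameLaw u).conv (hP.endgameLaw u)]

/-- The entropic Balog–Szemerédi–Gowers inequality. -/
lemma sum_endgameWeight_mul_dRuzsa_le (hP : IsDist P) :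
    ∑ u, endgameWeight P u * dRuzsa (endgameLaw P u) (endgameLaw P u) ≤
      3 * condMI P + 2 * ent (endgameWeight P) - ent (push (fun z => (z.1, z.2.2)) P) -
        ent (push (fun z => z.2) P) := by
  -- With `B₁ = Z - A₁` and `B₂ = Z - A₂`, where `Z = A₁ + B₁`, submodularity is applied to
  -- `(A₁, B₂ | S)`, to `(A₂, B₁ | S)`, to these two pairs, which both determine
  -- `A₁ - B₂ = A₂ - B₁`, and finally to `(A₁ - B₂, Z | S)`.
  have hM := hP.endgameCoupling
  have hAB := ent_push_submodular hM (fun z => z.2.1) (fun z => z.1.1 - z.2.2) fun z => z.1.2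
  have hBA := ent_push_submodular hM (fun z => z.2.2) (fun z => z.1.1 - z.2.1) fun z => z.1.2
  have hdiff := ent_endgameCoupling_add_ent_push_sub_le hP
  have hsum := ent_push_sum_endgameCoupling_add_le hP
  rw [push_endgameCoupling_left hP fun z => (z.2, z.1.2),
    push_endgameCoupling_right hP fun z => (z.1.1 - z.2, z.1.2),
    push_endgameCoupling_left hP fun z => z.1.2] at hAB
  rw [push_endgameCoupling_right hP fun z => (z.2, z.1.2),
    push_endgameCoupling_left hP fun z => (z.1.1 - z.2, z.1.2),
    push_endgameCoupling_left hP fun z => z.1.2] at hBA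
  rw [ent_endgameCoupling hP] at hdiff
  rw [ent_push_sum_endgameCoupling hP] at hsum
  have hent := sum_endgameWeight_mul_ent_endgameLaw hP
  simp only [add_sub_cancel_left] at hAB hBA
  simp only [dRuzsa, condMI, mul_sub, Finset.sum_sub_distrib, ← mul_div_assoc,
    ← Finset.sum_div]
  linarith

lemma avgDouble_condLaw_le_avgDouble_endgameLaw (hP : IsDist P) :
    avgDouble (push (fun z => z.2.2) P) (condLaw P (fun z => z.2.2) Prod.fst)
        (push (fun z => z.2.2) P) (condLaw P (fun z => z.2.2) Prod.fst) ≤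
      avgDouble (endgameWeight P) (endgameLaw P) (endgameWeight P) (endgameLaw P) +
        2 * (condMI P + ent (endgameWeight P) - ent (push (fun z => z.2) P)) := by
  have h := avgDouble_condLaw_le_of_factorsThrough hP (U := fun z => (z.1 + z.2.1, z.2.2))
    (V := fun z => z.2.2) Prod.fst fun _ _ e => (Prod.ext_iff.1 e).2
  have hcond := sum_endgameWeight_mul_ent_endgameLaw hP
  have hswap : ent (push (fun z => (z.2.2, z.1)) P) = ent (push (fun z => (z.1, z.2.2)) P) :=
    ent_push_congr hP fun x y => by simp only [Prod.mk.injEq, and_comm]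
  simp only [endgameWeight, endgameLaw, sum_push_mul_ent_condLaw hP] at hcond
  rw [hcond, hswap] at h
  simp only [endgameWeight, condMI]
  refine h.trans_eq ?_
  change avgDouble _ (endgameLaw P) _ (endgameLaw P) + _ = _
  ring

end BalogSzemerediGowers

lemma push_fst_fibreLaw [Finite G] {r : G → ℝ} (hr : IsDist r) :
    push Prod.fst (fibreLaw r r) = conv r r := by
  have h := congrArg (push fun w => w.1) (push_fst_snd_sub_fst_fibreLaw r r)
  simpa only [push_push, push_fst_prodDist (fun x => x) _ (hr.conv hr), push_id] using h

lemma sum_endgameWeight_smul_fibreLaw [Fintype G] {r : G → ℝ} (hr : IsDist r) :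
    ∑ u, endgameWeight (fibreLaw r r) u • endgameLaw (fibreLaw r r) u = conv r r := by
  rw [← push_fst_fibreLaw hr]
  exact sum_push_smul_condLaw (hr.fibreLaw hr) _ _

variable [Module (ZMod 2) G] {r : G → ℝ}

lemma push_sum_snd_sub_sum_fibreLaw [Finite G] (r : G → ℝ) :
    push (fun z => (z.1 + z.2.1, z.2.2 - (z.1 + z.2.1))) (fibreLaw r r) =
      prodDist (conv r r) (conv r r) := by
  cases nonempty_fintype G
  have hchar : ∀ x y x' y' : G, (x + y' + (x + y), x + y + (y' + x') - (x + y' + (x + y))) =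
      (y + y', x + x') := fun x y x' y' => by
    have hx : x + x = 0 := ZModModule.add_self x
    have hx' : -x = x := ZModModule.neg_eq_self x
    refine Prod.ext ?_ ?_
    · calc x + y' + (x + y) = x + x + (y + y') := by abel
        _ = y + y' := by rw [hx, zero_add]
    · calc x + y + (y' + x') - (x + y' + (x + y)) = -x + x' := by abel
        _ = x + x' := by rw [hx']
  rw [fibreLaw, push_push, conv_eq_push, ← push_prodDist]
  refine eq_of_forall_sum_mul_eq fun F => ?_
  simp only [sum_push_mul, hchar, prodDist, Fintype.sum_prod_type]
  rw [Finset.sum_comm]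
  refine Finset.sum_congr rfl fun y _ => ?_
  rw [Finset.sum_comm]
  refine Finset.sum_congr rfl fun y' _ => Finset.sum_congr rfl fun x _ =>
    Finset.sum_congr rfl fun x' _ => ?_
  ring

lemma ent_endgameWeight_fibreLaw [Finite G] (hr : IsDist r) :
    ent (endgameWeight (fibreLaw r r)) = 2 * ent (conv r r) := by
  rw [← ent_prodDist_conv_comm hr hr, ← push_sum_snd_sub_sum_fibreLaw]
  exact (ent_push_pair_sub (hr.fibreLaw hr) (fun z => z.1 + z.2.1) fun z => z.2.2).symm

variable [Fintype G]

lemma sum_endgameWeight_mul_dRuzsa_fibreLaw_le (hr : IsDist r) :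
    ∑ u, endgameWeight (fibreLaw r r) u *
      dRuzsa (endgameLaw (fibreLaw r r) u) (endgameLaw (fibreLaw r r) u) ≤ 3 * fibreMI r r := by
  have h := sum_endgameWeight_mul_dRuzsa_le (hr.fibreLaw hr)
  rw [ent_endgameWeight_fibreLaw hr, ent_push_fst_snd_fibreLaw hr hr,
    ent_push_mid_snd_fibreLaw hr hr] at h
  rw [fibreMI]
  linarith

lemma sum_endgameWeight_mul_ent_fibreLaw (hr : IsDist r) :
    ∑ u, endgameWeight (fibreLaw r r) u * ent (endgameLaw (fibreLaw r r) u) =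
      sDouble (conv r r) (conv r r) - fibreMI r r := by
  rw [sum_endgameWeight_mul_ent_endgameLaw (hr.fibreLaw hr), ent_endgameWeight_fibreLaw hr,
    fibreMI_eq hr hr, sDouble]
  ring

lemma sum_endgameWeight_mul_quotEnt_loss_le (hr : IsDist r) (V : Submodule (ZMod 2) G) :
    ∑ u, endgameWeight (fibreLaw r r) u *
      (ent (endgameLaw (fibreLaw r r) u) - quotEnt V (endgameLaw (fibreLaw r r) u)) ≤
      ent (conv r r) - quotEnt V (conv r r) := by
  have h := sum_push_mul_ent_sub_ent_push_condLaw_le (hr.fibreLaw hr)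
    (fun z => (z.1 + z.2.1, z.2.2)) Prod.fst V.mkQ
  rwa [push_fst_fibreLaw hr] at h

lemma avgDouble_givenSum_le_avgDouble_endgameLaw (hr : IsDist r) :
    avgDouble (conv (conv r r) (conv r r)) (givenSum (conv r r) (conv r r))
        (conv (conv r r) (conv r r)) (givenSum (conv r r) (conv r r)) ≤
      avgDouble (endgameWeight (fibreLaw r r)) (endgameLaw (fibreLaw r r))
        (endgameWeight (fibreLaw r r)) (endgameLaw (fibreLaw r r)) + 2 * fibreMI r r := by
  have h := avgDouble_condLaw_le_avgDouble_endgameLaw (hr.fibreLaw hr)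
  have hlaw : condLaw (fibreLaw r r) (fun z => z.2.2) Prod.fst =
      givenSum (conv r r) (conv r r) := by
    funext u
    rw [givenSum, ← push_fst_snd_sub_fst_fibreLaw, condLaw_push]
    simp only [add_sub_cancel]
  rwa [hlaw, push_snd_snd_fibreLaw, ent_endgameWeight_fibreLaw hr,
    ent_push_mid_snd_fibreLaw hr hr, add_sub_cancel_right] at h

end Endgame

/-! ## A weak polynomial Freiman–Ruzsa theorem -/

section RuzsaDistance

variable {G : Type*} [AddCommGroup G]

lemma dRuzsa_eq (p q : G → ℝ) : dRuzsa p q = (ent p + ent q) / 2 - sDouble p q := by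
  rw [dRuzsa, sDouble]
  ring

variable [Finite G] {c p q : G → ℝ}

lemma dRuzsa_comm (p q : G → ℝ) : dRuzsa p q = dRuzsa q p := by
  rw [dRuzsa_eq, dRuzsa_eq, sDouble_comm, add_comm (ent p)]

lemma dRuzsa_nonneg (hp : IsDist p) (hq : IsDist q) : 0 ≤ dRuzsa p q := by
  have hleft := ent_left_le_ent_conv hp hq
  have hright := ent_right_le_ent_conv hp hq
  rw [dRuzsa]
  linarith

lemma dRuzsa_conv_le (hc : IsDist c) (hp : IsDist p) (hq : IsDist q) :
    dRuzsa c (conv p q) ≤ dRuzsa c p + (ent (conv p q) - ent p) / 2 := by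
  have h := ent_conv_conv_add_ent_le hc hp hq
  simp only [dRuzsa]
  linarith

lemma sum_mul_dRuzsa_le {U : Type*} [Fintype U] {a : U → ℝ} {X : U → G → ℝ} (hc : IsDist c)
    (ha : IsDist a) (hX : ∀ u, IsDist (X u)) :
    ∑ u, a u * dRuzsa c (X u) ≤ dRuzsa c (∑ u, a u • X u) +
      (ent (∑ u, a u • X u) - ∑ u, a u * ent (X u)) / 2 := by
  have h := sum_mul_ent_le_ent_sum ha fun u => hc.conv (hX u)
  have hsum : ∑ u, a u * dRuzsa c (X u) =
      ∑ u, a u * ent (conv c (X u)) - ent c / 2 - (∑ u, a u * ent (X u)) / 2 := by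
    simp only [dRuzsa, mul_sub, Finset.sum_sub_distrib, mul_div_assoc', ← Finset.sum_div,
      ← Finset.sum_mul, ha.sum_eq_one, one_mul]
  rw [← conv_sum_smul] at h
  rw [hsum, dRuzsa]
  linarith

end RuzsaDistance

section Minimiser

variable {G : Type*} [AddCommGroup G] {c p q r : G → ℝ} {θ m : ℝ}

/-- The functional `τ(X ; Y) = d[X ; Y] + θ (d[Z ; X] + d[Z ; Y])`, with `Z` of law `c`, whose
minimisers are at distance zero from each other. -/
def tau (θ : ℝ) (c p q : G → ℝ) : ℝ := dRuzsa p q + θ * (dRuzsa c p + dRuzsa c q)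

lemma exists_tau_minimal [Finite G] (θ : ℝ) (hc : IsDist c) :
    ∃ p q, IsDist p ∧ IsDist q ∧ ∀ x y, IsDist x → IsDist y → tau θ c p q ≤ tau θ c x y := by
  cases nonempty_fintype G
  have hent : Continuous fun p : G → ℝ => ent p := by
    simp only [ent_eq_sum]
    fun_prop
  have hconv : Continuous fun z : (G → ℝ) × (G → ℝ) => conv z.1 z.2 := by
    refine continuous_pi fun s => ?_
    simp only [conv, finsum_eq_sum_of_fintype]
    fun_prop
  have hdist : Continuous fun z : (G → ℝ) × (G → ℝ) => dRuzsa z.1 z.2 := by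
    unfold dRuzsa
    fun_prop
  have htau : Continuous fun z : (G → ℝ) × (G → ℝ) => tau θ c z.1 z.2 := by
    unfold tau
    fun_prop
  have hcompact := (isCompact_stdSimplex ℝ G).prod (isCompact_stdSimplex ℝ G)
  obtain ⟨⟨p, q⟩, hpq, hmin⟩ :=
    hcompact.exists_isMinOn ⟨(c, c), isDist_iff.1 hc, isDist_iff.1 hc⟩ htau.continuousOn
  exact ⟨p, q, isDist_iff.2 hpq.1, isDist_iff.2 hpq.2, fun x y hx hy =>
    hmin (Set.mk_mem_prod (isDist_iff.1 hx) (isDist_iff.1 hy))⟩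

lemma le_of_forall_le_tau {U W : Type*} [Fintype U] [Fintype W] {a : U → ℝ} {b : W → ℝ}
    {X : U → G → ℝ} {Y : W → G → ℝ} (ha : IsDist a) (hb : IsDist b)
    (h : ∀ u w, m ≤ tau θ c (X u) (Y w)) :
    m ≤ (∑ u, a u * ent (X u) + ∑ w, b w * ent (Y w)) / 2 - avgDouble a X b Y +
      θ * (∑ u, a u * dRuzsa c (X u) + ∑ w, b w * dRuzsa c (Y w)) := by
  have hone : ∑ u, ∑ w, a u * b w = 1 := by
    simp only [← Finset.mul_sum, hb.sum_eq_one, mul_one, ha.sum_eq_one]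
  calc m = ∑ u, ∑ w, a u * b w * m := by simp only [← Finset.sum_mul, hone, one_mul]
    _ ≤ ∑ u, ∑ w, a u * b w * tau θ c (X u) (Y w) :=
      Finset.sum_le_sum fun u _ => Finset.sum_le_sum fun w _ =>
        mul_le_mul_of_nonneg_left (h u w) (mul_nonneg (ha.nonneg u) (hb.nonneg w))
    _ = _ := by
      rw [← sum_sum_mul_mul_add ha hb, ← sum_sum_mul_mul_add ha hb, avgDouble, Finset.sum_div,
        Finset.mul_sum, ← Finset.sum_sub_distrib, ← Finset.sum_add_distrib]
      refine Finset.sum_congr rfl fun u _ => ?_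
      rw [Finset.sum_div, Finset.mul_sum, ← Finset.sum_sub_distrib, ← Finset.sum_add_distrib]
      refine Finset.sum_congr rfl fun w _ => ?_
      rw [tau, dRuzsa_eq (X u)]
      ring

lemma sum_conv_mul_dRuzsa_givenSum_le [Fintype G] (hc : IsDist c) (hp : IsDist p) (hq : IsDist q) :
    ∑ u, conv p q u * dRuzsa c (givenSum p q u) ≤ dRuzsa c p + (ent p - sDouble p q) / 2 := by
  have h := sum_mul_dRuzsa_le hc (hp.conv hq) (hp.givenSum hq)
  rwa [sum_conv_smul_givenSum hp hq, sum_conv_mul_ent_givenSum hp hq] at h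

variable [Finite G]

lemma le_of_forall_le_tau_givenSum (hθ : 0 ≤ θ) (hc : IsDist c) (hp : IsDist p) (hq : IsDist q)
    (hm : ∀ x y, IsDist x → IsDist y → m ≤ tau θ c x y) :
    m ≤ 2 * dRuzsa p q - dRuzsa (conv p q) (conv p q) - fibreMI p q +
      θ * (dRuzsa c p + dRuzsa c q + dRuzsa p q) := by
  cases nonempty_fintype G
  have havg := le_of_forall_le_tau (hp.conv hq) (hq.conv hp) fun u w =>
    hm _ _ (hp.givenSum hq u) (hq.givenSum hp w)
  have hX := sum_conv_mul_dRuzsa_givenSum_le hc hp hq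
  have hY := sum_conv_mul_dRuzsa_givenSum_le hc hq hp
  have hfib := two_mul_sDouble_add_fibreMI hp hq
  have hconv : ent (conv p q) = ent p + ent q - sDouble p q := by rw [sDouble]; ring
  rw [sum_conv_mul_ent_givenSum hp hq, sum_conv_mul_ent_givenSum hq hp, sDouble_comm q p] at havg
  rw [sDouble_comm q p] at hY
  have hθsum := mul_le_mul_of_nonneg_left (add_le_add hX hY) hθ
  simp only [dRuzsa_eq, hconv] at *
  linarith

lemma le_of_forall_le_tau_endgame [Module (ZMod 2) G] (hθ : 0 ≤ θ) (hc : IsDist c)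
    (hr : IsDist r) (hm : ∀ x y, IsDist x → IsDist y → m ≤ tau θ c x y) :
    m ≤ 3 * fibreMI r r + θ * (2 * dRuzsa c (conv r r) + fibreMI r r +
      dRuzsa (conv r r) (conv r r)) := by
  cases nonempty_fintype G
  have hP := hr.fibreLaw hr
  have hdist := sum_mul_dRuzsa_le hc hP.endgameWeight hP.endgameLaw
  rw [sum_endgameWeight_smul_fibreLaw hr, sum_endgameWeight_mul_ent_fibreLaw hr] at hdist
  have hbsg := sum_endgameWeight_mul_dRuzsa_fibreLaw_le hr
  have havg : m ≤ ∑ u, endgameWeight (fibreLaw r r) u *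
      tau θ c (endgameLaw (fibreLaw r r) u) (endgameLaw (fibreLaw r r) u) := by
    have hsum := hP.endgameWeight.sum_eq_one
    calc m = ∑ u, endgameWeight (fibreLaw r r) u * m := by rw [← Finset.sum_mul, hsum, one_mul]
      _ ≤ _ := Finset.sum_le_sum fun u _ => mul_le_mul_of_nonneg_left
        (hm _ _ (hP.endgameLaw u) (hP.endgameLaw u)) (hP.endgameWeight.nonneg u)
  have hθdist := mul_le_mul_of_nonneg_left hdist hθ
  simp only [tau, mul_add, Finset.sum_add_distrib, mul_left_comm _ θ, ← Finset.mul_sum] at havg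
  rw [dRuzsa_eq (conv r r)] at *
  linarith

/-- Fibring and the endgame applied to `X + Y` and to `X + Y + X' + Y'` would otherwise produce
pairs with a smaller value of `τ`. -/
lemma dRuzsa_eq_zero_of_tau_minimal [Module (ZMod 2) G] (hc : IsDist c) (hp : IsDist p)
    (hq : IsDist q) (hmin : ∀ x y, IsDist x → IsDist y → tau (1 / 40) c p q ≤ tau (1 / 40) c x y) :
    dRuzsa p q = 0 := by
  have hr := hp.conv hq
  have ht := hr.conv hr
  have hfib := le_of_forall_le_tau_givenSum (by norm_num) hc hp hq hmin
  have hfib' := le_of_forall_le_tau_givenSum (by norm_num) hc hr hr hmin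
  have htt := hmin _ _ ht ht
  have hend := le_of_forall_le_tau_endgame (by norm_num) hc hr hmin
  have hcp := dRuzsa_conv_le hc hp hq
  have hcq := dRuzsa_conv_le hc hq hp
  have hct := dRuzsa_conv_le hc hr hr
  rw [conv_comm q p] at hcq
  have hpq : dRuzsa p q = ent (conv p q) - ent p / 2 - ent q / 2 := rfl
  have hrr : dRuzsa (conv p q) (conv p q) =
    ent (conv (conv p q) (conv p q)) - ent (conv p q) / 2 - ent (conv p q) / 2 := rfl
  simp only [tau] at *
  refine le_antisymm ?_ (dRuzsa_nonneg hp hq)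
  linarith [fibreMI_nonneg hp hq, fibreMI_nonneg hr hr]

end Minimiser

section Stabilizer

variable {G : Type*} [AddCommGroup G] [Module (ZMod 2) G] {q : G → ℝ}

/-- The subspace of all translations that leave `q` invariant. -/
def translationStabilizer (q : G → ℝ) : Submodule (ZMod 2) G :=
  AddSubgroup.toZModSubmodule 2
    { carrier := {v | ∀ s, q (s + v) = q s}
      add_mem' := fun hv hw s => by rw [← add_assoc, hw, hv]
      zero_mem' := fun s => by rw [add_zero]
      neg_mem' := fun {v} hv s => by rw [← hv (s + -v), neg_add_cancel_right] }

lemma mem_translationStabilizer {v : G} :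
    v ∈ translationStabilizer q ↔ ∀ s, q (s + v) = q s := Iff.rfl

end Stabilizer

section Structure

variable {G : Type*} [AddCommGroup G] [Finite G] {p q : G → ℝ}

/-- Equality holds in Jensen's inequality for the strictly concave function `negMulLog`. -/
lemma apply_sub_eq_conv_of_ent_conv_eq (hp : IsDist p) (hq : IsDist q)
    (h : ent (conv p q) = ent q) {x : G} (hx : p x ≠ 0) (s : G) : q (s - x) = conv p q s := by
  cases nonempty_fintype G
  have hconv : ∀ s, conv p q s = ∑ x, p x * q (s - x) := fun s => finsum_eq_sum_of_fintype _
  have hle : ∀ s, ∑ x, p x * negMulLog (q (s - x)) ≤ negMulLog (conv p q s) := fun s => by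
    rw [hconv]
    exact concaveOn_negMulLog.le_map_sum (fun x _ => hp.nonneg x) hp.sum_eq_one
      fun x _ => hq.nonneg (s - x)
  have hsum : ∑ s, ∑ x, p x * negMulLog (q (s - x)) = ∑ s, negMulLog (conv p q s) := by
    rw [← ent_eq_sum, h, Finset.sum_comm]
    have htranslate : ∀ x, ∑ s, negMulLog (q (s - x)) = ent q := fun x => by
      rw [ent_eq_sum]
      exact Fintype.sum_equiv (Equiv.subRight x) _ _ fun _ => rfl
    simp only [← Finset.mul_sum, htranslate, ← Finset.sum_mul, hp.sum_eq_one, one_mul]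
  have heq := (Finset.sum_eq_sum_iff_of_le fun s _ => hle s).1 hsum s (Finset.mem_univ s)
  rw [hconv] at heq ⊢
  exact (strictConcaveOn_negMulLog.map_sum_eq_iff' (fun x _ => hp.nonneg x) hp.sum_eq_one
    fun x _ => hq.nonneg (s - x)).1 heq.symm x (Finset.mem_univ x) hx

variable [Module (ZMod 2) G]

lemma conv_unifOn_translationStabilizer (q : G → ℝ) :
    conv q (unifOn (translationStabilizer q : Set G)) = q := by
  cases nonempty_fintype G
  funext s
  have hterm : ∀ v, unifOn (translationStabilizer q : Set G) v * q (s - v) =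
      unifOn (translationStabilizer q : Set G) v * q s := fun v => by
    by_cases hv : v ∈ translationStabilizer q
    · rw [← mem_translationStabilizer.1 hv (s - v), sub_add_cancel]
    · simp [unifOn, hv]
  rw [conv_comm, conv, finsum_eq_sum_of_fintype, Finset.sum_congr rfl fun v _ => hterm v,
    ← Finset.sum_mul, (isDist_unifOn_submodule _).sum_eq_one, one_mul]

lemma quotEnt_eq_zero_of_forall_sub_mem (hp : IsDist p) {V : Submodule (ZMod 2) G}
    (h : ∀ x y, p x ≠ 0 → p y ≠ 0 → x - y ∈ V) : quotEnt V p = 0 := by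
  cases nonempty_fintype G
  cases nonempty_fintype (G ⧸ V)
  obtain ⟨x, -, hx⟩ := Finset.exists_ne_zero_of_sum_ne_zero (hp.sum_eq_one.trans_ne one_ne_zero)
  have hconst : push V.mkQ p = push (fun _ => V.mkQ x) p := by
    refine eq_of_forall_sum_mul_eq fun F => ?_
    rw [sum_push_mul, sum_push_mul]
    refine Finset.sum_congr rfl fun y _ => ?_
    by_cases hy : p y = 0
    · rw [hy, zero_mul, zero_mul]
    · rw [mkQ_eq_mkQ_iff.2 (h y x hy hx)]
  rw [quotEnt, hconst]
  exact ent_push_eq_zero hp fun _ _ => rfl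

lemma exists_submodule_of_dRuzsa_eq_zero (hp : IsDist p) (hq : IsDist q)
    (h : dRuzsa p q = 0) :
    ∃ V : Submodule (ZMod 2) G, ldim V = ent q ∧ conv q (unifOn (V : Set G)) = q := by
  have hleft := ent_left_le_ent_conv hp hq
  have hright := ent_right_le_ent_conv hp hq
  rw [dRuzsa] at h
  have hconv : ent (conv p q) = ent q := by linarith
  have hsupp : ∀ x y, p x ≠ 0 → p y ≠ 0 → x - y ∈ translationStabilizer q := fun x y hx hy => by
    refine mem_translationStabilizer.2 fun s => ?_
    have hshift := (apply_sub_eq_conv_of_ent_conv_eq hp hq hconv hx (s + x)).trans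
      (apply_sub_eq_conv_of_ent_conv_eq hp hq hconv hy (s + x)).symm
    rwa [add_sub_cancel_right, add_sub_assoc, eq_comm] at hshift
  have hp' := ent_le_quotEnt_add_ldim hp (translationStabilizer q)
  rw [quotEnt_eq_zero_of_forall_sub_mem hp hsupp] at hp'
  have hq' := ent_conv_unifOn hq (translationStabilizer q)
  rw [conv_unifOn_translationStabilizer] at hq'
  have hnonneg := ent_nonneg (hq.push (translationStabilizer q).mkQ)
  exact ⟨translationStabilizer q, by linarith, conv_unifOn_translationStabilizer q⟩

lemma exists_ldim_le_quotEnt_le (hp : IsDist p) : ∃ V : Submodule (ZMod 2) G,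
    ldim V ≤ 43 * ent p ∧ quotEnt V p ≤ 42 * dRuzsa p p := by
  cases nonempty_fintype G
  obtain ⟨x, y, hx, hy, hmin⟩ := exists_tau_minimal (1 / 40) hp
  have hzero := dRuzsa_eq_zero_of_tau_minimal hp hx hy hmin
  have hpp := hmin p p hp hp
  rw [tau, tau, hzero] at hpp
  wlog hle : dRuzsa p y ≤ dRuzsa p x generalizing x y
  · refine this y x hy hx (fun z w hz hw => ?_) (dRuzsa_comm x y ▸ hzero) (by linarith)
      (not_le.1 hle).le
    rw [tau, dRuzsa_comm y x, add_comm (dRuzsa p y)]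
    exact hmin z w hz hw
  obtain ⟨V, hV, hinv⟩ := exists_submodule_of_dRuzsa_eq_zero hx hy hzero
  have hquot := ent_conv_unifOn (hp.conv hy) V
  rw [conv_assoc, hinv] at hquot
  have hmono := ent_left_le_ent_conv (hp.push V.mkQ) (hy.push V.mkQ)
  rw [← push_conv] at hmono
  have hleft := ent_left_le_ent_conv hp hy
  have hright := ent_right_le_ent_conv hp hy
  have hdouble := sDouble_nonneg hp hp
  have hnear : dRuzsa p y ≤ 21 * dRuzsa p p := by linarith
  have hpp' := dRuzsa_eq p p
  have hpy : dRuzsa p y = ent (conv p y) - ent p / 2 - ent y / 2 := rfl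
  exact ⟨V, by linarith [hnear], by linarith [hnear]⟩

lemma exists_le_ldim_le_quotEnt_le (hp : IsDist p) (W : Submodule (ZMod 2) G) :
    ∃ V : Submodule (ZMod 2) G, W ≤ V ∧ ldim V ≤ ldim W + 43 * quotEnt W p ∧
      quotEnt V p ≤ 42 * dRuzsa p p := by
  obtain ⟨V, hV, hquot⟩ := exists_ldim_le_quotEnt_le (hp.push W.mkQ)
  refine ⟨V.comap W.mkQ, fun w hw => ?_, ?_, ?_⟩
  · simp [(Submodule.Quotient.mk_eq_zero W).2 hw]
  · rw [ldim_comap_mkQ]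
    linarith
  · rw [quotEnt_push_mkQ hp] at hquot
    have h := sDouble_le_sDouble_push_add hp hp W.mkQ
    rw [dRuzsa_eq] at hquot ⊢
    linarith

end Structure

/-! ## Optimal systems of subspaces -/

/-- A subspace `base` together with a family of subspaces containing it. -/
@[ext]
structure SubspaceSystem (G I : Type*) [AddCommGroup G] [Module (ZMod 2) G] where
  base : Submodule (ZMod 2) G
  sub : I → Submodule (ZMod 2) G
  base_le : ∀ i, base ≤ sub i

namespace SubspaceSystem

variable {G I : Type*} [AddCommGroup G] [Module (ZMod 2) G]

instance [Finite G] [Finite I] : Finite (SubspaceSystem G I) :=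
  Finite.of_injective (fun S => (S.base, S.sub)) fun _ _ h =>
    SubspaceSystem.ext (Prod.ext_iff.1 h).1 (Prod.ext_iff.1 h).2

instance : Inhabited (SubspaceSystem G I) := ⟨⟨⊥, fun _ => ⊥, fun _ => le_rfl⟩⟩

/-- Replaces the `i`-th subspace of `S` by the larger subspace `T`. -/
def enlarge [DecidableEq I] (S : SubspaceSystem G I) (i : I) (T : Submodule (ZMod 2) G)
    (hT : S.sub i ≤ T) : SubspaceSystem G I where
  base := S.base
  sub := Function.update S.sub i T
  base_le j := by
    rcases eq_or_ne j i with rfl | hj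
    · simpa using (S.base_le j).trans hT
    · simpa [hj] using S.base_le j

/-- Adds the subspace `T` to the base and to each member of `S`. -/
def addTo (S : SubspaceSystem G I) (T : Submodule (ZMod 2) G) : SubspaceSystem G I where
  base := T
  sub i := S.sub i ⊔ T
  base_le _ := le_sup_right

variable [Fintype I]

/-- The average dimension of the members of the system over the base. -/
def spread (a : I → ℝ) (S : SubspaceSystem G I) : ℝ :=
  ∑ i, a i * (ldim (S.sub i) - ldim S.base)

/-- The energy of a system at scale `l`: entropies are paid in full, the spread at rate `l` and the
base at the much cheaper rate `l ^ 3`. -/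
def energy (a : I → ℝ) (X : I → G → ℝ) (l : ℝ) (S : SubspaceSystem G I) : ℝ :=
  ∑ i, a i * quotEnt (S.sub i) (X i) + l * S.spread a + l ^ 3 * ldim S.base

/-- `S` has the least energy at scale `l` among all systems. -/
def IsOptimal (a : I → ℝ) (X : I → G → ℝ) (l : ℝ) (S : SubspaceSystem G I) : Prop :=
  ∀ S' : SubspaceSystem G I, S.energy a X l ≤ S'.energy a X l

variable {a : I → ℝ} {X : I → G → ℝ} {l : ℝ} {S : SubspaceSystem G I}

lemma energy_half_add_le (hl : 0 ≤ l) (S : SubspaceSystem G I) :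
    S.energy a X (l / 2) + l / 2 * S.spread a ≤ S.energy a X l := by
  have h := mul_nonneg (pow_nonneg hl 3) (ldim_nonneg S.base)
  rw [energy, energy, div_pow]
  linarith

lemma sum_mul_enlarge [DecidableEq I] (a : I → ℝ) {i : I} {T : Submodule (ZMod 2) G}
    (hT : S.sub i ≤ T) (f : I → Submodule (ZMod 2) G → ℝ) :
    ∑ j, a j * f j ((S.enlarge i T hT).sub j)
      = ∑ j, a j * f j (S.sub j) + a i * (f i T - f i (S.sub i)) := by
  rw [← sub_eq_iff_eq_add', ← Finset.sum_sub_distrib, Finset.sum_eq_single i]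
  · simp [enlarge, mul_sub]
  · intro j _ hj
    simp [enlarge, hj]
  · simp

lemma IsOptimal.quotEnt_le (h : S.IsOptimal a X l) {i : I} (hi : 0 < a i)
    {T : Submodule (ZMod 2) G} (hT : S.sub i ≤ T) :
    quotEnt (S.sub i) (X i) ≤ quotEnt T (X i) + l * (ldim T - ldim (S.sub i)) := by
  classical
  have hopt := h (S.enlarge i T hT)
  have hent := sum_mul_enlarge a hT fun j V => quotEnt V (X j)
  have hdim := sum_mul_enlarge a hT fun _ V => ldim V - ldim S.base
  have hbase : (S.enlarge i T hT).base = S.base := rfl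
  simp only [energy, spread, hbase, hent, hdim] at hopt
  refine le_of_mul_le_mul_left ?_ hi
  linarith

variable [Finite G]

lemma exists_isOptimal (a : I → ℝ) (X : I → G → ℝ) (l : ℝ) :
    ∃ S : SubspaceSystem G I, S.IsOptimal a X l :=
  Finite.exists_min (energy a X l)

lemma spread_nonneg (ha : ∀ i, 0 ≤ a i) (S : SubspaceSystem G I) : 0 ≤ S.spread a :=
  Finset.sum_nonneg fun i _ => mul_nonneg (ha i) (sub_nonneg.2 (ldim_mono (S.base_le i)))

lemma mul_spread_add_le_energy (ha : ∀ i, 0 ≤ a i) (hX : ∀ i, IsDist (X i)) (l : ℝ)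
    (S : SubspaceSystem G I) : l * S.spread a + l ^ 3 * ldim S.base ≤ S.energy a X l := by
  have h : 0 ≤ ∑ i, a i * quotEnt (S.sub i) (X i) :=
    Finset.sum_nonneg fun i _ => mul_nonneg (ha i) (ent_nonneg ((hX i).push _))
  rw [energy]
  linarith

lemma energy_nonneg (ha : ∀ i, 0 ≤ a i) (hX : ∀ i, IsDist (X i)) (hl : 0 ≤ l)
    (S : SubspaceSystem G I) : 0 ≤ S.energy a X l := by
  have hspread := spread_nonneg ha S
  have hbase := ldim_nonneg S.base
  exact le_trans (by positivity) (mul_spread_add_le_energy ha hX l S)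

lemma IsOptimal.energy_le (h : S.IsOptimal a X l) (hX : ∀ i, IsDist (X i)) :
    S.energy a X l ≤ ∑ i, a i * ent (X i) := by
  refine (h default).trans_eq ?_
  simp [energy, spread, default, ldim_bot, quotEnt_bot, hX]

lemma IsOptimal.sum_mul_overlap_le (h : S.IsOptimal a X l) (ha : ∀ i, 0 ≤ a i)
    (hX : ∀ i, IsDist (X i)) (hl : 0 < l) (T : Submodule (ZMod 2) G) :
    ∑ i, a i * (ldim (S.sub i ⊓ T) - ldim S.base) ≤ l ^ 2 * (ldim T - ldim S.base) := by
  have hopt := h (S.addTo T)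
  have hent : ∑ i, a i * quotEnt (S.sub i ⊔ T) (X i) ≤ ∑ i, a i * quotEnt (S.sub i) (X i) :=
    Finset.sum_le_sum fun i _ => mul_le_mul_of_nonneg_left (quotEnt_anti (hX i) le_sup_left) (ha i)
  have hspread : (S.addTo T).spread a
      = S.spread a - ∑ i, a i * (ldim (S.sub i ⊓ T) - ldim S.base) := by
    rw [spread, spread, ← Finset.sum_sub_distrib]
    refine Finset.sum_congr rfl fun i _ => ?_
    rw [← mul_sub, addTo]
    linear_combination a i * ldim_sup_add_ldim_inf (S.sub i) T
  rw [energy, energy, hspread] at hopt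
  refine le_of_mul_le_mul_left ?_ hl
  simp only [addTo] at hopt
  linarith

lemma IsOptimal.sum_overlap_le (h : S.IsOptimal a X l) (ha : ∀ i, 0 ≤ a i)
    (hX : ∀ i, IsDist (X i)) (hl : 0 < l) :
    ∑ i, ∑ j, a i * a j * (ldim (S.sub i ⊓ S.sub j) - ldim S.base) ≤
      l * ∑ i, a i * ent (X i) := by
  have hspread : l * S.spread a ≤ ∑ i, a i * ent (X i) := by
    have hbase := mul_nonneg (pow_nonneg hl.le 3) (ldim_nonneg S.base)
    linarith [mul_spread_add_le_energy ha hX l S, h.energy_le hX]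
  refine le_trans ?_ (mul_le_mul_of_nonneg_left hspread hl.le)
  rw [← mul_assoc, ← sq, Finset.sum_comm, spread, Finset.mul_sum]
  refine Finset.sum_le_sum fun j _ => ?_
  have hj := mul_le_mul_of_nonneg_left (h.sum_mul_overlap_le ha hX hl (S.sub j)) (ha j)
  rw [Finset.mul_sum] at hj
  calc ∑ i, a i * a j * (ldim (S.sub i ⊓ S.sub j) - ldim S.base)
      = ∑ i, a j * (a i * (ldim (S.sub i ⊓ S.sub j) - ldim S.base)) :=
        Finset.sum_congr rfl fun i _ => by ring
    _ ≤ a j * (l ^ 2 * (ldim (S.sub j) - ldim S.base)) := hj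
    _ = l ^ 2 * (a j * (ldim (S.sub j) - ldim S.base)) := by ring

end SubspaceSystem

lemma exists_sub_succ_le {f : ℕ → ℝ} {κ N : ℝ} {J : ℕ} (hJ : 1 ≤ κ * J) (hN : 0 ≤ N)
    (hzero : f 0 ≤ N) (hlast : 0 ≤ f J) : ∃ j < J, f j - f (j + 1) ≤ κ * N := by
  by_contra! hcon
  have hpos : J ≠ 0 := by
    rintro rfl
    norm_num at hJ
  have hlt : ∑ _j ∈ Finset.range J, κ * N < ∑ j ∈ Finset.range J, (f j - f (j + 1)) :=
    Finset.sum_lt_sum_of_nonempty (Finset.nonempty_range_iff.2 hpos) fun j hj =>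
      hcon j (Finset.mem_range.1 hj)
  rw [Finset.sum_range_sub', Finset.sum_const, Finset.card_range, nsmul_eq_mul] at hlt
  nlinarith

namespace SubspaceSystem

variable {G I : Type*} [AddCommGroup G] [Module (ZMod 2) G] [Finite G] [Fintype I] {a : I → ℝ}
  {X : I → G → ℝ} {l l₀ κ : ℝ}

/-- The cost of a base: the inverse cube of the smallest scale used in the pigeonholing. -/
def baseCost (κ l₀ : ℝ) : ℝ := (l₀ / 2 ^ ⌈2 / κ⌉₊)⁻¹ ^ 3

lemma baseCost_nonneg (κ : ℝ) (hl₀ : 0 ≤ l₀) : 0 ≤ baseCost κ l₀ := by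
  unfold baseCost
  positivity

/-- Pigeonholing over the dyadic scales `l₀ / 2 ^ j`: the least energy decreases by at least half
of `l * spread` when the scale `l` is halved. -/
lemma exists_isOptimal_mul_spread_le (ha : ∀ i, 0 ≤ a i) (hX : ∀ i, IsDist (X i)) (hκ : 0 < κ)
    (hl₀ : 0 < l₀) :
    ∃ l, 0 < l ∧ l ≤ l₀ ∧ ∃ S : SubspaceSystem G I, S.IsOptimal a X l ∧
      ldim S.base ≤ baseCost κ l₀ * ∑ i, a i * ent (X i) ∧
      l * S.spread a ≤ κ * ∑ i, a i * ent (X i) := by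
  have hN : 0 ≤ ∑ i, a i * ent (X i) :=
    Finset.sum_nonneg fun i _ => mul_nonneg (ha i) (ent_nonneg (hX i))
  have hscale : ∀ j : ℕ, 0 < l₀ / 2 ^ j := fun j => by positivity
  choose S hS using fun j : ℕ => exists_isOptimal a X (l₀ / 2 ^ j)
  obtain ⟨j, hj, hdrop⟩ := exists_sub_succ_le (f := fun j => (S j).energy a X (l₀ / 2 ^ j))
    (κ := κ / 2) (J := ⌈2 / κ⌉₊) (by
      have := Nat.le_ceil (2 / κ)
      rw [div_le_iff₀ hκ] at this
      linarith) hN ((hS 0).energy_le hX) (energy_nonneg ha hX (hscale _).le _)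
  have henergy := (mul_spread_add_le_energy ha hX _ _).trans ((hS j).energy_le hX)
  have hspread := mul_nonneg (hscale j).le (spread_nonneg ha (S j))
  refine ⟨l₀ / 2 ^ j, hscale j, div_le_self hl₀.le (one_le_pow₀ one_le_two), S j, hS j, ?_, ?_⟩
  · have hmono : l₀ / 2 ^ ⌈2 / κ⌉₊ ≤ l₀ / 2 ^ j :=
      div_le_div_of_nonneg_left hl₀.le (by positivity) (pow_le_pow_right₀ one_le_two hj.le)
    have hcube := mul_le_mul_of_nonneg_right (pow_le_pow_left₀ (hscale _).le hmono 3)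
      (ldim_nonneg (S j).base)
    rw [baseCost, inv_pow, ← div_eq_inv_mul, le_div_iff₀ (pow_pos (hscale _) 3)]
    linarith
  · have hnext := hS (j + 1) (S j)
    have hhalf := energy_half_add_le (a := a) (X := X) (hscale j).le (S j)
    rw [pow_succ, ← div_div] at hnext hdrop
    linarith

end SubspaceSystem

/-! ## Average doubling of a family of distributions -/

/-- Modulo a subspace of dimension at most `L` times their total entropy, any two distributions on
a finite space have doubling mass at most `η` times their total entropy. -/
def DoublingBound.{u} (η L : ℝ) : Prop :=
  ∀ (G : Type u) [AddCommGroup G] [Module (ZMod 2) G] [Finite G] (p q : G → ℝ),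
    IsDist p → IsDist q → ∃ V : Submodule (ZMod 2) G, ldim V ≤ L * (ent p + ent q) ∧
      sDouble (push V.mkQ p) (push V.mkQ q) ≤ η * (quotEnt V p + quotEnt V q)

universe u

lemma sum_sum_inl_inr_le {U W : Type*} [Fintype U] [Fintype W] {F : U ⊕ W → U ⊕ W → ℝ}
    (hF : ∀ i j, 0 ≤ F i j) : ∑ u, ∑ w, F (.inl u) (.inr w) ≤ ∑ i, ∑ j, F i j := by
  simp only [Fintype.sum_sum_type]
  refine le_add_of_le_of_nonneg (Finset.sum_le_sum fun u _ => ?_)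
    (Finset.sum_nonneg fun w _ => add_nonneg ?_ ?_)
  · exact le_add_of_nonneg_left (Finset.sum_nonneg fun v _ => hF _ _)
  · exact Finset.sum_nonneg fun v _ => hF _ _
  · exact Finset.sum_nonneg fun v _ => hF _ _

section AverageDoubling

variable {G : Type u} [AddCommGroup G] [Module (ZMod 2) G] [Finite G] {p q : G → ℝ} {η L κ l : ℝ}

lemma sDouble_push_mkQ_comap_le (hp : IsDist p) (hq : IsDist q) (W : Submodule (ZMod 2) G)
    (V : Submodule (ZMod 2) (G ⧸ W)) :
    sDouble (push (V.comap W.mkQ).mkQ p) (push (V.comap W.mkQ).mkQ q) ≤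
      sDouble (push V.mkQ (push W.mkQ p)) (push V.mkQ (push W.mkQ q)) := by
  have hcomp (r : G → ℝ) : push ((V.comap W.mkQ).mapQ V W.mkQ le_rfl)
      (push (V.comap W.mkQ).mkQ r) = push V.mkQ (push W.mkQ r) := by
    rw [push_push, push_push]
    rfl
  have h := sDouble_le_sDouble_push_add (hp.push (V.comap W.mkQ).mkQ)
    (hq.push (V.comap W.mkQ).mkQ) ((V.comap W.mkQ).mapQ V W.mkQ le_rfl)
  have hent : ent (push V.mkQ (push W.mkQ p)) = ent (push (V.comap W.mkQ).mkQ p) :=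
    quotEnt_push_mkQ hp W V
  rw [hcomp, hcomp, hent] at h
  linarith

lemma DoublingBound.exists_le (h : DoublingBound.{u} η L) (hp : IsDist p) (hq : IsDist q)
    (W : Submodule (ZMod 2) G) :
    ∃ V : Submodule (ZMod 2) G, W ≤ V ∧ ldim V ≤ ldim W + L * (quotEnt W p + quotEnt W q) ∧
      sDouble (push V.mkQ p) (push V.mkQ q) ≤ η * (quotEnt V p + quotEnt V q) := by
  obtain ⟨V, hV, hs⟩ := h (G ⧸ W) _ _ (hp.push W.mkQ) (hq.push W.mkQ)
  refine ⟨V.comap W.mkQ, fun w hw => ?_, ?_, ?_⟩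
  · simp [(Submodule.Quotient.mk_eq_zero W).2 hw]
  · rw [ldim_comap_mkQ]
    exact (add_comm _ _).trans_le (add_le_add_right hV _)
  · rw [quotEnt_push_mkQ hp, quotEnt_push_mkQ hq] at hs
    exact (sDouble_push_mkQ_comap_le hp hq W V).trans hs

namespace SubspaceSystem

variable {I : Type*} [Fintype I] {a : I → ℝ} {X : I → G → ℝ} {S : SubspaceSystem G I}

lemma IsOptimal.sDouble_le_of_doublingBound (h : S.IsOptimal a X l) (hX : ∀ i, IsDist (X i))
    (hl : 0 ≤ l) (hη : 0 ≤ η) (hL : 0 ≤ L) (hbd : DoublingBound.{u} η L) {i j : I}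
    (hi : 0 < a i) (hj : 0 < a j) :
    sDouble (X i) (X j) ≤
      ((η + 2 * l * L) * ent (X i) + l * (ldim (S.sub i) - ldim S.base)
          + (ent (X i) - quotEnt S.base (X i)))
        + ((η + 2 * l * L) * ent (X j) + l * (ldim (S.sub j) - ldim S.base))
        + (ldim (S.sub i ⊓ S.sub j) - ldim S.base) := by
  obtain ⟨T, hT, hdim, hs⟩ := hbd.exists_le (hX i) (hX j) (S.sub i ⊔ S.sub j)
  have htransverse := sDouble_le_sDouble_push_mkQ_add (hX i) (hX j) (S.base_le i) (S.base_le j)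
    (le_sup_left.trans hT) (le_sup_right.trans hT)
  have hloss_i := h.quotEnt_le hi (le_sup_left.trans hT)
  have hloss_j := h.quotEnt_le hj (le_sup_right.trans hT)
  have hmodular := ldim_sup_add_ldim_inf (S.sub i) (S.sub j)
  have hinf := ldim_mono (le_inf (S.base_le i) (S.base_le j))
  have hsum : quotEnt (S.sub i ⊔ S.sub j) (X i) + quotEnt (S.sub i ⊔ S.sub j) (X j) ≤
      ent (X i) + ent (X j) := add_le_add (quotEnt_le_ent (hX i) _) (quotEnt_le_ent (hX j) _)
  have hsumT : quotEnt T (X i) + quotEnt T (X j) ≤ ent (X i) + ent (X j) :=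
    add_le_add (quotEnt_le_ent (hX i) _) (quotEnt_le_ent (hX j) _)
  have hsumL := mul_le_mul_of_nonneg_left hsum hL
  have hdim_i : l * (ldim T - ldim (S.sub i)) ≤
      l * (ldim (S.sub j) - ldim S.base + L * (ent (X i) + ent (X j))) :=
    mul_le_mul_of_nonneg_left (by linarith) hl
  have hdim_j : l * (ldim T - ldim (S.sub j)) ≤
      l * (ldim (S.sub i) - ldim S.base + L * (ent (X i) + ent (X j))) :=
    mul_le_mul_of_nonneg_left (by linarith) hl
  linarith [hdim_i, hdim_j, mul_le_mul_of_nonneg_left hsumT hη]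

lemma IsOptimal.sDouble_le_dRuzsa (h : S.IsOptimal a X l) (hX : ∀ i, IsDist (X i))
    (hl : 0 ≤ l) {i j : I} (hi : 0 < a i) (hj : 0 < a j) :
    sDouble (X i) (X j) ≤
      (43 * l * ent (X i) + 42 * dRuzsa (X i) (X i) + l * (ldim (S.sub i) - ldim S.base)
          + (ent (X i) - quotEnt S.base (X i)))
        + (ldim (S.sub i ⊓ S.sub j) - ldim S.base) := by
  set T := S.sub i ⊔ S.sub j
  obtain ⟨V, hV, hdim, hquot⟩ := exists_le_ldim_le_quotEnt_le (hX i) (S.sub i)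
  have htransverse := sDouble_le_sDouble_push_mkQ_add (hX i) (hX j) (S.base_le i) (S.base_le j)
    (le_sup_left : S.sub i ≤ T) (le_sup_right : S.sub j ≤ T)
  have hleft : sDouble (push T.mkQ (X i)) (push T.mkQ (X j)) ≤ quotEnt T (X i) :=
    sDouble_le_ent_left ((hX i).push _) ((hX j).push _)
  have hloss_i := h.quotEnt_le hi hV
  have hloss_j := h.quotEnt_le hj (le_sup_right : S.sub j ≤ T)
  have hmodular := ldim_sup_add_ldim_inf (S.sub i) (S.sub j)
  have hinf := ldim_mono (le_inf (S.base_le i) (S.base_le j))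
  have hdim_i : l * (ldim V - ldim (S.sub i)) ≤ l * (43 * ent (X i)) :=
    mul_le_mul_of_nonneg_left (by linarith [quotEnt_le_ent (hX i) (S.sub i)]) hl
  have hdim_j : l * (ldim T - ldim (S.sub j)) ≤ l * (ldim (S.sub i) - ldim S.base) :=
    mul_le_mul_of_nonneg_left (by linarith) hl
  linarith

end SubspaceSystem

/-- The dimension, per unit of entropy, of the base that the estimates for families below spend:
the pigeonholing starts at the scale `κ / (4 * L + 88)`. -/
def familyCost (κ L : ℝ) : ℝ := SubspaceSystem.baseCost (κ / 2) (κ / (4 * L + 88))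

lemma familyCost_nonneg (hκ : 0 ≤ κ) (hL : 0 ≤ L) : 0 ≤ familyCost κ L :=
  SubspaceSystem.baseCost_nonneg _ (by positivity)

variable {U W : Type*} [Fintype U] [Fintype W] {a : U → ℝ} {b : W → ℝ} {X : U → G → ℝ}
  {Y : W → G → ℝ} {e : ℝ}

lemma avgDouble_le_of_doublingBound (hbd : DoublingBound.{u} η L) (hη : 0 ≤ η) (hL : 0 ≤ L)
    (hκ : 0 < κ) (ha : IsDist a) (hX : ∀ u, IsDist (X u)) (hb : IsDist b)
    (hY : ∀ w, IsDist (Y w)) (hl : 0 ≤ l)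
    (hloss : ∀ V, ∑ u, a u * (ent (X u) - quotEnt V (X u)) ≤ e + l * ldim V) :
    avgDouble a X b Y ≤
      (η + κ + l * familyCost κ L) * (∑ u, a u * ent (X u) + ∑ w, b w * ent (Y w)) + e := by
  have hc : ∀ i, 0 ≤ Sum.elim a b i := Sum.rec ha.nonneg hb.nonneg
  have hZ : ∀ i, IsDist (Sum.elim X Y i) := Sum.rec hX hY
  obtain ⟨m, hm, hle, S, hS, hbase, hspread⟩ := SubspaceSystem.exists_isOptimal_mul_spread_le
    hc hZ (half_pos hκ) (l₀ := κ / (4 * L + 88)) (by positivity)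
  have hpair := avgDouble_le_of_forall_pos (X := X) (Y := Y) ha hb fun u w hu hw =>
    hS.sDouble_le_of_doublingBound hZ hm.le hη hL hbd (i := .inl u) (j := .inr w) hu hw
  have hoverlap := (sum_sum_inl_inr_le fun i j => mul_nonneg (mul_nonneg (hc i) (hc j))
    (sub_nonneg.2 (ldim_mono (le_inf (S.base_le i) (S.base_le j))))).trans
    (hS.sum_overlap_le hc hZ hm)
  have hscale : (2 * L + 1) * m * ∑ i, Sum.elim a b i * ent (Sum.elim X Y i) ≤
      κ / 2 * ∑ i, Sum.elim a b i * ent (Sum.elim X Y i) := by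
    refine mul_le_mul_of_nonneg_right ?_
      (Finset.sum_nonneg fun i _ => mul_nonneg (hc i) (ent_nonneg (hZ i)))
    rw [le_div_iff₀ (by positivity)] at hle
    linarith
  simp only [SubspaceSystem.spread, Fintype.sum_sum_type, Sum.elim_inl, Sum.elim_inr]
    at hbase hspread hoverlap hscale
  simp only [Sum.elim_inl, Sum.elim_inr, mul_add (a _), mul_add (b _), Finset.sum_add_distrib,
    mul_left_comm _ m, mul_left_comm _ (η + 2 * m * L), ← Finset.mul_sum] at hpair
  have hcost := mul_le_mul_of_nonneg_left hbase hl
  rw [← familyCost] at hcost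
  linarith [hloss S.base]

lemma avgDouble_self_le (hL : 0 ≤ L) (hκ : 0 < κ) (ha : IsDist a) (hX : ∀ u, IsDist (X u))
    (hl : 0 ≤ l)
    (hloss : ∀ V, ∑ u, a u * (ent (X u) - quotEnt V (X u)) ≤ e + l * ldim V) :
    avgDouble a X a X ≤ (κ + l * familyCost κ L) * ∑ u, a u * ent (X u) +
      42 * ∑ u, a u * dRuzsa (X u) (X u) + e := by
  obtain ⟨m, hm, hle, S, hS, hbase, hspread⟩ := SubspaceSystem.exists_isOptimal_mul_spread_le
    ha.nonneg hX (half_pos hκ) (l₀ := κ / (4 * L + 88)) (by positivity)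
  have hpair := avgDouble_le_of_forall_pos (f := fun u => 43 * m * ent (X u) +
      42 * dRuzsa (X u) (X u) + m * (ldim (S.sub u) - ldim S.base)
        + (ent (X u) - quotEnt S.base (X u))) (g := fun _ => 0)
    (M := fun u w => ldim (S.sub u ⊓ S.sub w) - ldim S.base) ha ha fun u w hu hw =>
    (hS.sDouble_le_dRuzsa hX hm.le hu hw).trans_eq (by rw [add_zero])
  have hoverlap := hS.sum_overlap_le ha.nonneg hX hm
  have hscale : 44 * m * ∑ u, a u * ent (X u) ≤ κ / 2 * ∑ u, a u * ent (X u) := by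
    refine mul_le_mul_of_nonneg_right ?_
      (Finset.sum_nonneg fun u _ => mul_nonneg (ha.nonneg u) (ent_nonneg (hX u)))
    rw [le_div_iff₀ (by positivity)] at hle
    linarith [mul_nonneg hm.le hL]
  simp only [mul_add, Finset.sum_add_distrib, mul_left_comm _ m, mul_left_comm _ (43 * m),
    mul_left_comm _ (42 : ℝ), ← Finset.mul_sum, mul_zero, Finset.sum_const_zero] at hpair
  rw [SubspaceSystem.spread] at hspread
  have hcost := mul_le_mul_of_nonneg_left hbase hl
  rw [← familyCost] at hcost
  linarith [hloss S.base]

end AverageDoubling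

/-! ## Near-extremal pairs -/

section NearExtremal

variable {G : Type*} [AddCommGroup G] [Module (ZMod 2) G]

/-- Passing to a quotient by `V` costs at most `e + l * ldim V` in entropy. -/
def IsRigid (e l : ℝ) (p : G → ℝ) : Prop :=
  ∀ V : Submodule (ZMod 2) G, ent p - quotEnt V p ≤ e + l * ldim V

lemma IsRigid.mono {p : G → ℝ} {e e' l : ℝ} (h : IsRigid e l p) (he : e ≤ e') :
    IsRigid e' l p :=
  fun V => (h V).trans (add_le_add_left he _)

/-- The doubling mass of a rigid pair is within `e` of the bound given by `DoublingBound η L`,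
at a scale `l` for which the costs of all estimates below are covered by `e`. -/
structure NearExtremal (η κ L e l : ℝ) (p q : G → ℝ) : Prop where
  isDist_left : IsDist p
  isDist_right : IsDist q
  isRigid_left : IsRigid e l p
  isRigid_right : IsRigid e l q
  le_sDouble : η * (ent p + ent q) - e ≤ sDouble p q
  cost_le : (2 * κ + 2 * l * L + 4 * l * familyCost κ L) * (ent p + ent q) ≤ e

end NearExtremal

section Iteration

variable {G : Type u} [AddCommGroup G] [Module (ZMod 2) G] {p q r t : G → ℝ}
  {η κ L e l : ℝ}

lemma isDist_unit : IsDist fun _ : Unit => (1 : ℝ) :=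
  isDist_iff.2 ⟨fun _ => zero_le_one, by simp⟩

lemma IsRigid.sDouble_self_le [Finite G] (hr : IsDist r) (h : IsRigid e l r)
    (hbd : DoublingBound.{u} η L) (hη : 0 ≤ η) (hL : 0 ≤ L) (hκ : 0 < κ) (hl : 0 ≤ l) :
    sDouble r r ≤ 2 * (η + κ + l * familyCost κ L) * ent r + e := by
  have havg := avgDouble_le_of_doublingBound (κ := κ) hbd hη hL hκ isDist_unit (fun _ => hr)
    isDist_unit (fun _ => hr) hl fun V => by simpa using h V
  simp only [avgDouble, Finset.univ_unique, Finset.sum_singleton, one_mul] at havg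
  linarith

lemma IsRigid.avgDouble_givenSum_le [Fintype G] (hp : IsDist p) (hq : IsDist q)
    (h : IsRigid e l p) (hbd : DoublingBound.{u} η L) (hη : 0 ≤ η) (hL : 0 ≤ L) (hκ : 0 < κ)
    (hl : 0 ≤ l) :
    avgDouble (conv p q) (givenSum p q) (conv q p) (givenSum q p) ≤
      2 * (η + κ + l * familyCost κ L) * sDouble p q + e := by
  have havg := avgDouble_le_of_doublingBound (κ := κ) hbd hη hL hκ (hp.conv hq) (hp.givenSum hq)
    (hq.conv hp) (hq.givenSum hp) hl fun V =>
      (sum_conv_mul_ent_sub_ent_push_givenSum_le hp hq V.mkQ).trans (h V)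
  rw [sum_conv_mul_ent_givenSum hp hq, sum_conv_mul_ent_givenSum hq hp, sDouble_comm q p] at havg
  linarith

protected lemma IsRigid.conv [Finite G] (hp : IsDist p) (hq : IsDist q) (hpr : IsRigid e l p)
    (hqr : IsRigid e l q) (hs : η * (ent p + ent q) - e ≤ sDouble p q) (hbd : DoublingBound.{u} η L)
    (hη : 0 ≤ η) (hL : 0 ≤ L) (hl : 0 ≤ l) :
    IsRigid (3 * e + 2 * l * L * (ent p + ent q)) (2 * l) (conv p q) := by
  intro V
  obtain ⟨T, hVT, hdim, hT⟩ := hbd.exists_le hp hq V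
  have hanti := quotEnt_anti (hp.conv hq) hVT
  have hquotT := mul_le_mul_of_nonneg_left
    (add_le_add (quotEnt_le_ent hp T) (quotEnt_le_ent hq T)) hη
  have hquotV := mul_le_mul_of_nonneg_left
    (add_le_add (quotEnt_le_ent hp V) (quotEnt_le_ent hq V)) hL
  have hcost : l * ldim T ≤ l * (ldim V + L * (ent p + ent q)) :=
    mul_le_mul_of_nonneg_left (by linarith) hl
  rw [sDouble, ← push_conv] at hT
  rw [sDouble] at hs
  linarith [hpr T, hqr T]

namespace NearExtremal

lemma cost_nonneg (hL : 0 ≤ L) (hκ : 0 < κ) (hl : 0 ≤ l) :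
    0 ≤ 2 * κ + 2 * l * L + 4 * l * familyCost κ L := by
  have := familyCost_nonneg hκ.le hL
  positivity

lemma error_nonneg [Finite G] (h : NearExtremal η κ L e l p q) (hL : 0 ≤ L) (hκ : 0 < κ)
    (hl : 0 ≤ l) :
    0 ≤ e :=
  (mul_nonneg (cost_nonneg hL hκ hl)
    (add_nonneg (ent_nonneg h.isDist_left) (ent_nonneg h.isDist_right))).trans h.cost_le

lemma ent_conv_le [Finite G] (h : NearExtremal η κ L e l p q) : ent (conv p q) ≤ ent p + ent q := by
  have hs := sDouble_nonneg h.isDist_left h.isDist_right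
  rw [sDouble] at hs
  linarith

lemma isRigid_conv [Finite G] (h : NearExtremal η κ L e l p q) (hbd : DoublingBound.{u} η L)
    (hη : 0 ≤ η) (hL : 0 ≤ L) (hκ : 0 < κ) (hl : 0 ≤ l) : IsRigid (4 * e) (2 * l) (conv p q) := by
  have hM := add_nonneg (ent_nonneg h.isDist_left) (ent_nonneg h.isDist_right)
  have hcost := mul_nonneg (show 0 ≤ 2 * κ + 4 * l * familyCost κ L by
    have := familyCost_nonneg hκ.le hL
    positivity) hM
  exact (h.isRigid_left.conv h.isDist_left h.isDist_right h.isRigid_right h.le_sDouble hbd hη hL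
    hl).mono (by linarith [h.cost_le])

lemma sDouble_conv_self_le [Finite G] (h : NearExtremal η κ L e l p q) (hbd : DoublingBound.{u} η L)
    (hη : 0 ≤ η) (hL : 0 ≤ L) (hκ : 0 < κ) (hl : 0 ≤ l) :
    sDouble (conv p q) (conv p q) ≤ 2 * η * ent (conv p q) + 4 * e := by
  have hrigid := h.isRigid_left.conv h.isDist_left h.isDist_right h.isRigid_right h.le_sDouble
    hbd hη hL hl
  have hself := hrigid.sDouble_self_le (κ := κ) (h.isDist_left.conv h.isDist_right) hbd hη hL hκ
    (by positivity)
  have hent : (2 * κ + 4 * l * familyCost κ L) * ent (conv p q) ≤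
      (2 * κ + 4 * l * familyCost κ L) * (ent p + ent q) := by
    have := familyCost_nonneg hκ.le hL
    exact mul_le_mul_of_nonneg_left h.ent_conv_le (by positivity)
  linarith [h.cost_le]

lemma avgDouble_givenSum_le [Fintype G] (h : NearExtremal η κ L e l p q)
    (hbd : DoublingBound.{u} η L) (hη : 0 ≤ η) (hL : 0 ≤ L) (hκ : 0 < κ) (hl : 0 ≤ l) :
    avgDouble (conv p q) (givenSum p q) (conv q p) (givenSum q p) ≤
      2 * η * sDouble p q + 2 * e := by
  have havg := h.isRigid_left.avgDouble_givenSum_le (κ := κ) h.isDist_left h.isDist_right hbd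
    hη hL hκ hl
  have hfamily := familyCost_nonneg hκ.le hL
  have hs : sDouble p q ≤ ent p + ent q :=
    (sDouble_le_ent_left h.isDist_left h.isDist_right).trans
      (le_add_of_nonneg_right (ent_nonneg h.isDist_right))
  have hcost : (2 * κ + 2 * l * familyCost κ L) * sDouble p q ≤
      (2 * κ + 2 * l * L + 4 * l * familyCost κ L) * (ent p + ent q) := by
    have hcoef : 2 * κ + 2 * l * familyCost κ L ≤ 2 * κ + 2 * l * L + 4 * l * familyCost κ L := by
      linarith [mul_nonneg hl hL, mul_nonneg hl hfamily]
    exact mul_le_mul hcoef hs (sDouble_nonneg h.isDist_left h.isDist_right)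
      (cost_nonneg hL hκ hl)
  linarith [h.cost_le]

lemma fibreMI_le [Finite G] (h : NearExtremal η κ L e l p q) (hbd : DoublingBound.{u} η L)
    (hη : 0 ≤ η) (hL : 0 ≤ L) (hκ : 0 < κ) (hl : 0 ≤ l) :
    fibreMI p q ≤ 8 * e := by
  cases nonempty_fintype G
  have hfibring := two_mul_sDouble_add_fibreMI h.isDist_left h.isDist_right
  have hbase := h.sDouble_conv_self_le hbd hη hL hκ hl
  have hfibre := h.avgDouble_givenSum_le hbd hη hL hκ hl
  have hent : η * ent (conv p q) + η * sDouble p q = η * (ent p + ent q) := by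
    rw [sDouble]
    ring
  linarith [h.le_sDouble]

lemma conv_self [Finite G] (h : NearExtremal η κ L e l p q) (hbd : DoublingBound.{u} η L)
    (hη : 0 ≤ η) (hL : 0 ≤ L) (hκ : 0 < κ) (hl : 0 ≤ l) :
    NearExtremal η κ L (4 * e) (2 * l) (conv p q) (conv p q) := by
  cases nonempty_fintype G
  have hrigid := h.isRigid_conv hbd hη hL hκ hl
  have hr := h.isDist_left.conv h.isDist_right
  refine ⟨hr, hr, hrigid, hrigid, ?_, ?_⟩
  · have hfibring := two_mul_sDouble_add_fibreMI h.isDist_left h.isDist_right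
    have hfibre := h.avgDouble_givenSum_le hbd hη hL hκ hl
    have hent : η * ent (conv p q) + η * sDouble p q = η * (ent p + ent q) := by
      rw [sDouble]
      ring
    linarith [h.le_sDouble, fibreMI_nonneg h.isDist_left h.isDist_right]
  · have hent := mul_le_mul_of_nonneg_left h.ent_conv_le (cost_nonneg hL hκ hl)
    have hκr := mul_nonneg hκ.le (ent_nonneg hr)
    linarith [h.cost_le]

lemma le_avgDouble_givenSum [Fintype G] (h : NearExtremal η κ L e l t t)
    (hbd : DoublingBound.{u} η L) (hη : 0 ≤ η) (hη1 : η ≤ 1) (hL : 0 ≤ L) (hκ : 0 < κ)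
    (hl : 0 ≤ l) :
    4 * η ^ 2 * ent t - 8 * e ≤
      avgDouble (conv t t) (givenSum t t) (conv t t) (givenSum t t) := by
  have hfibring := two_mul_sDouble_add_fibreMI h.isDist_left h.isDist_left
  have hbase := h.sDouble_conv_self_le hbd hη hL hκ hl
  have hent : η * ent (conv t t) = 2 * η * ent t - η * sDouble t t := by
    rw [sDouble]
    ring
  have hle := mul_le_mul_of_nonneg_left h.le_sDouble (by linarith : 0 ≤ 1 + η)
  have he := mul_le_mul_of_nonneg_right hη1 (h.error_nonneg hL hκ hl)
  linarith [fibreMI_nonneg h.isDist_left h.isDist_left]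

end NearExtremal

lemma IsRigid.avgDouble_givenSum_conv_self_le [Fintype G] (hr : IsDist r)
    (h : IsRigid e l (conv r r)) (hL : 0 ≤ L) (hκ : 0 < κ) (hl : 0 ≤ l) :
    avgDouble (conv (conv r r) (conv r r)) (givenSum (conv r r) (conv r r))
        (conv (conv r r) (conv r r)) (givenSum (conv r r) (conv r r)) ≤
      (κ + l * familyCost κ L) * ent (conv r r) + 128 * fibreMI r r + e := by
  have hP := hr.fibreLaw hr
  have hfamily := familyCost_nonneg hκ.le hL
  have hself := avgDouble_self_le hL hκ hP.endgameWeight hP.endgameLaw hl fun V =>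
    (sum_endgameWeight_mul_quotEnt_loss_le hr V).trans (h V)
  rw [sum_endgameWeight_mul_ent_fibreLaw hr] at hself
  have hent : sDouble (conv r r) (conv r r) - fibreMI r r ≤ ent (conv r r) := by
    linarith [sDouble_le_ent_left (hr.conv hr) (hr.conv hr), fibreMI_nonneg hr hr]
  have hcost := mul_le_mul_of_nonneg_left hent (by positivity : 0 ≤ κ + l * familyCost κ L)
  linarith [avgDouble_givenSum_le_avgDouble_endgameLaw hr,
    sum_endgameWeight_mul_dRuzsa_fibreLaw_le hr]

lemma NearExtremal.sq_mul_le [Finite G] (h : NearExtremal η κ L e l p q)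
    (hbd : DoublingBound.{u} η L) (hη : 0 ≤ η) (hη1 : η ≤ 1) (hL : 0 ≤ L) (hκ : 0 < κ)
    (hl : 0 ≤ l) :
    η ^ 2 * (ent p + ent q) ≤ 2122 * e := by
  cases nonempty_fintype G
  have hr := h.conv_self hbd hη hL hκ hl
  have ht := hr.conv_self hbd hη hL hκ (by positivity)
  have hlower := ht.le_avgDouble_givenSum hbd hη hη1 hL hκ (by positivity)
  have hupper := ht.isRigid_left.avgDouble_givenSum_conv_self_le hr.isDist_left hL hκ
    (by positivity)
  have hMI := hr.fibreMI_le hbd hη hL hκ (by positivity)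
  have hcost := ht.cost_le
  have hlLt := mul_nonneg (mul_nonneg hl hL) (ent_nonneg ht.isDist_left)
  have hκt := mul_nonneg hκ.le (ent_nonneg ht.isDist_left)
  have hlΛt := mul_nonneg (mul_nonneg hl (familyCost_nonneg hκ.le hL)) (ent_nonneg ht.isDist_left)
  have hent : ent p + ent q ≤ 2 * ent (conv (conv p q) (conv p q)) := by
    linarith [ent_left_le_ent_conv h.isDist_left h.isDist_right,
      ent_right_le_ent_conv h.isDist_left h.isDist_right,
      ent_left_le_ent_conv hr.isDist_left hr.isDist_left]
  linarith [hlLt, hκt, hlΛt, mul_le_mul_of_nonneg_left hent (sq_nonneg η)]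

end Iteration

section Induction

variable {η η' L l : ℝ}

lemma doublingBound_of_forall_loss_le (hl : 0 < l)
    (h : ∀ (G : Type u) [AddCommGroup G] [Module (ZMod 2) G] [Finite G] (p q : G → ℝ),
      IsDist p → IsDist q →
      (∀ V, ent p - quotEnt V p + (ent q - quotEnt V q) ≤ l * ldim V) →
      sDouble p q ≤ η * (ent p + ent q)) :
    DoublingBound.{u} η (1 / l) := by
  intro G _ _ _ p q hp hq
  obtain ⟨V, hV⟩ := Finite.exists_min fun V : Submodule (ZMod 2) G =>
    quotEnt V p + quotEnt V q + l * ldim V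
  refine ⟨V, ?_, h (G ⧸ V) _ _ (hp.push V.mkQ) (hq.push V.mkQ) fun W => ?_⟩
  · have hbot := hV ⊥
    rw [quotEnt_bot hp, quotEnt_bot hq, ldim_bot] at hbot
    rw [one_div, ← div_eq_inv_mul, le_div_iff₀ hl]
    linarith [ent_nonneg (hp.push V.mkQ), ent_nonneg (hq.push V.mkQ)]
  · have hcomap := hV (W.comap V.mkQ)
    rw [ldim_comap_mkQ] at hcomap
    rw [quotEnt_push_mkQ hp, quotEnt_push_mkQ hq]
    linarith

lemma DoublingBound.mono (h : DoublingBound.{u} η L) (hη : η ≤ η') : DoublingBound.{u} η' L := by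
  intro G _ _ _ p q hp hq
  obtain ⟨V, hdim, hs⟩ := h G p q hp hq
  exact ⟨V, hdim, hs.trans (mul_le_mul_of_nonneg_right hη
    (add_nonneg (ent_nonneg (hp.push V.mkQ)) (ent_nonneg (hq.push V.mkQ))))⟩

lemma doublingBound_half : DoublingBound.{u} (1 / 2) 0 := by
  intro G _ _ _ p q hp hq
  exact ⟨⊥, by simp only [ldim_bot, zero_mul, le_refl], sDouble_le_half (hp.push _) (hq.push _)⟩

lemma DoublingBound.exists_improve {δ : ℝ} (h : DoublingBound.{u} (η + δ) L) (hη : 0 ≤ η)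
    (hη1 : η + δ ≤ 1) (hδ : 0 < δ) (hδη : 5000 * δ ≤ η ^ 2) (hL : 0 ≤ L) :
    ∃ L' : ℝ, 0 ≤ L' ∧ DoublingBound.{u} (η - δ) L' := by
  have hfamily := familyCost_nonneg (half_pos hδ).le hL
  set D := 2 * L + 4 * familyCost (δ / 2) L
  have hl : 0 < δ / (D + 1) := by positivity
  refine ⟨1 / (δ / (D + 1)), by positivity, doublingBound_of_forall_loss_le hl ?_⟩
  intro G _ _ _ p q hp hq hloss
  have hp0 := ent_nonneg hp
  have hq0 := ent_nonneg hq
  by_contra! hs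
  have hpos : 0 < ent p + ent q := by
    by_contra! hle
    have hzero : ent p + ent q = 0 := by linarith
    rw [hzero] at hs
    linarith [sDouble_le_ent_left hp hq]
  have hcost : δ / (D + 1) * D ≤ δ := by
    rw [div_mul_eq_mul_div, div_le_iff₀ (by positivity)]
    linarith
  have hextremal :
      NearExtremal (η + δ) (δ / 2) L (2 * δ * (ent p + ent q)) (δ / (D + 1)) p q :=
    { isDist_left := hp
      isDist_right := hq
      isRigid_left := fun V => by
        linarith [hloss V, quotEnt_le_ent hq V, mul_nonneg hδ.le hpos.le]
      isRigid_right := fun V => by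
        linarith [hloss V, quotEnt_le_ent hp V, mul_nonneg hδ.le hpos.le]
      le_sDouble := by linarith
      cost_le := mul_le_mul_of_nonneg_right (by linarith) hpos.le }
  have hsq := hextremal.sq_mul_le h (by positivity) hη1 hL (by positivity) hl.le
  have hle : (η + δ) ^ 2 ≤ 4244 * δ := le_of_mul_le_mul_right (by linarith) hpos
  linarith [pow_le_pow_left₀ hη (le_add_of_nonneg_right hδ.le) 2]

theorem exists_doublingBound {ε : ℝ} (hε : 0 < ε) :
    ∃ L : ℝ, 0 ≤ L ∧ DoublingBound.{u} ε L := by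
  set S : Set ℝ := {η | 0 < η ∧ ∃ L, 0 ≤ L ∧ DoublingBound.{u} η L}
  have hhalf : 1 / 2 ∈ S := ⟨by norm_num, 0, le_rfl, doublingBound_half⟩
  have hbdd : BddBelow S := ⟨0, fun η hη => hη.1.le⟩
  have hnonneg : 0 ≤ sInf S := le_csInf ⟨_, hhalf⟩ fun η hη => hη.1.le
  suffices hzero : sInf S = 0 by
    obtain ⟨η, ⟨-, L, hL, hbd⟩, hηε⟩ := exists_lt_of_csInf_lt ⟨_, hhalf⟩ (hzero.trans_lt hε)
    exact ⟨L, hL, hbd.mono hηε.le⟩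
  by_contra hne
  have hinf : 0 < sInf S := lt_of_le_of_ne hnonneg (Ne.symm hne)
  have hle : sInf S ≤ 1 / 2 := csInf_le hbdd hhalf
  set δ := sInf S ^ 2 / 5000 with hδ
  have hδpos : 0 < δ := div_pos (pow_pos hinf 2) (by norm_num)
  have hδlt : δ < sInf S := by nlinarith [hinf]
  obtain ⟨η, ⟨-, L, hL, hbd⟩, hη⟩ := exists_lt_of_csInf_lt ⟨_, hhalf⟩
    (lt_add_of_pos_right (sInf S) hδpos)
  obtain ⟨L', hL', hbd'⟩ := (hbd.mono hη.le).exists_improve hnonneg (by linarith) hδpos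
    (by linarith) hL
  have hmem : sInf S - δ ∈ S := ⟨sub_pos.2 hδlt, L', hL', hbd'⟩
  linarith [csInf_le hbdd hmem]

end Induction

theorem statement3_general :
    ∀ ε : ℝ, 0 < ε → ∃ L : ℝ, 0 < L ∧
      ∀ (G : Type u) [AddCommGroup G] [Module (ZMod 2) G] [Finite G] (p q : G → ℝ),
        IsDist p → IsDist q →
        ∃ V : Submodule (ZMod 2) G,
          ent (unifOn (V : Set G)) ≤ L * (ent p + ent q) ∧
          ent (conv p (unifOn (V : Set G))) - ent (unifOn (V : Set G)) ≤
            ent (conv p q) - ent q + ε * (ent p + ent q) := by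
  intro ε hε
  obtain ⟨L, hL, hbd⟩ := exists_doublingBound hε
  refine ⟨L + 1, by positivity, fun G _ _ _ p q hp hq => ?_⟩
  obtain ⟨V, hdim, hs⟩ := hbd G p q hp hq
  have hcontract := ent_push_conv_add_ent_le hq hp V.mkQ
  have hquot := mul_le_mul_of_nonneg_left
    (add_le_add (quotEnt_le_ent hp V) (quotEnt_le_ent hq V)) hε.le
  rw [conv_comm q p, push_conv] at hcontract
  rw [sDouble] at hs
  refine ⟨V, ?_, ?_⟩
  · rw [ent_unifOn_submodule]
    linarith [ent_nonneg hp, ent_nonneg hq]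
  · rw [ent_conv_unifOn hp, ent_unifOn_submodule]
    linarith

/-- For every `ε > 0` there is `L > 0` such that for independent `X, Y` there is
a subspace `V` with `H[𝐔_V] ≤ L(H[X]+H[Y])` and
`H[X + 𝐔_V] − H[𝐔_V] ≤ H[X+Y] − H[Y] + ε(H[X]+H[Y])`. -/
theorem statement3 :
    ∀ ε : ℝ, 0 < ε → ∃ L : ℝ, 0 < L ∧
      ∀ (n : ℕ) (p q : Fvec n → ℝ), IsDist p → IsDist q →
        ∃ V : Submodule (ZMod 2) (Fvec n),
          ent (unifOn (V : Set (Fvec n))) ≤ L * (ent p + ent q) ∧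
          ent (conv p (unifOn (V : Set (Fvec n)))) - ent (unifOn (V : Set (Fvec n))) ≤
            ent (conv p q) - ent q + ε * (ent p + ent q) := by
  intro ε hε
  obtain ⟨L, hL, h⟩ := statement3_general ε hε
  exact ⟨L, hL, fun n => h (Fvec n)⟩
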